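/- Let Ω be a separable metric space in which every Borel probability measure is Radon. Fix ρ⁰ ∈ P(Ω) and points x_i ∈ Ω (i = 1,…,n, n ≥ 1) with (1/n)Σ_{i=1}^n δ_{x_i} → ρ⁰ narrowly as n → ∞. Let ζ : Ω → P(Ω) be narrowly continuous, and for each n let Y₁,…,Y_n be independent with Y_i distributed according to ζ^{x_i}; set p(dx dy) := ρ⁰(dx) ζ^x(dy). Then the empirical measures L_n := (1/n)Σ_{i=1}^n δ_{Y_i} satisfy the large-deviation principle in P(Ω) (with the narrow topology) with speed n and rate functional J(ρ) := inf_{q ∈ Γ(ρ⁰,ρ)} H(q|p), where Γ(ρ⁰,ρ) is the set of probability measures on Ω×Ω with first marginal ρ⁰ and second marginal ρ. -/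

import Mathlib

open MeasureTheory Filter Topology Set
open scoped ENNReal NNReal Classical

noncomputable section

/-- A separable (pseudo)metric space is second countable. -/
instance (priority := 50) secondCountable_of_sep {Ω : Type*} [MetricSpace Ω]
    [TopologicalSpace.SeparableSpace Ω] : SecondCountableTopology Ω :=
  UniformSpace.secondCountable_of_separable Ω

/-- The measurable structure on the space of probability measures (as a subtype
of measures). -/
noncomputable instance probMeasurableSpace {Ω : Type*} [MeasurableSpace Ω] :
    MeasurableSpace (ProbabilityMeasure Ω) :=
  show MeasurableSpace {μ : Measure Ω // IsProbabilityMeasure μ} from inferInstance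

/-- Relative entropy `H(q|p) = ∫ log(dq/dp) dq ∈ [0,∞]` for probability
measures. -/
noncomputable def relEntNN {α : Type*} [MeasurableSpace α] (q p : Measure α) : ℝ≥0∞ :=
  if q ≪ p ∧ Integrable (fun x => Real.log ((q.rnDeriv p x).toReal)) q
  then ENNReal.ofReal (∫ x, Real.log ((q.rnDeriv p x).toReal) ∂q) else ⊤

/-- The large-deviation principle with speed `n`. -/
def IsLDP {X : Type*} [TopologicalSpace X] [MeasurableSpace X]
    (μ : ℕ → Measure X) (J : X → ℝ≥0∞) : Prop :=
  ((∃ x, J x ≠ ⊤) ∧ ∀ c : ℝ≥0∞, c ≠ ⊤ → IsCompact {x | J x ≤ c}) ∧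
  (∀ U : Set X, IsOpen U →
    (-(((⨅ x ∈ U, J x) : ℝ≥0∞) : EReal)) ≤
      liminf (fun n : ℕ => (((n : ℝ)⁻¹ : ℝ) : EReal) * ENNReal.log (μ n U)) atTop) ∧
  (∀ C : Set X, IsClosed C →
    limsup (fun n : ℕ => (((n : ℝ)⁻¹ : ℝ) : EReal) * ENNReal.log (μ n C)) atTop ≤
      (-(((⨅ x ∈ C, J x) : ℝ≥0∞) : EReal)))

/-!
The pairs `(xᵢ, Yᵢ)` are independent with laws `δ_{xᵢ} ⊗ ζ^{xᵢ}`, and the principle is proved for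
their empirical measures; the one for `L_n` follows by contraction along the second projection.
For bounded `F` on pairs put `Λ_F(a) = log ∫ e^{F(a, b)} ζ^a(db)`. Tilting every factor by `F`
changes the law of the pair empirical measure `q_n` by the density
`exp (n (∫ F dq_n - n⁻¹ ∑ᵢ Λ_F(xᵢ)))`, and `n⁻¹ ∑ᵢ Λ_F(xᵢ) → ∫ Λ_F dρ⁰`.
With Chebyshev's inequality this gives the upper bound near `q` at rate
`sup_F (∫ F dq - ∫ Λ_F dρ⁰)`. The functions `F(a, b) = t f(a)` force the first marginal of `q` to be
`ρ⁰` when the supremum is finite, and then a Donsker–Varadhan argument identifies it with `H(q|p)`.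
With the law of large numbers for the tilted pairs it gives the lower bound at the tilted measures
`e^{F - Λ_F} p`; these approximate, in topology and in entropy, every `q` of finite entropy with
first marginal `ρ⁰`. Exponential tightness comes from the same exponential moment bound applied to
indicators of complements of compact sets.
-/

open ProbabilityTheory ExpGrowth

section LargeDeviations

variable {X : Type*} [TopologicalSpace X] [MeasurableSpace X]

/-- Exponential tightness with speed `n`: outside suitable compact sets the measures `μ n` decay
at any prescribed exponential rate. -/
def ExponentiallyTight (μ : ℕ → Measure X) : Prop :=
  ∀ a : ℝ, ∃ K : Set X, IsCompact K ∧ expGrowthSup (fun n => μ n Kᶜ) ≤ -(a : EReal)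

/-- The large-deviation lower bound with rate `e`, localised at the point `x`. -/
def LowerBoundAt (μ : ℕ → Measure X) (x : X) (e : EReal) : Prop :=
  ∀ U ∈ 𝓝 x, -e ≤ expGrowthInf fun n => μ n U

variable {μ ν : ℕ → Measure X} {J : X → ℝ≥0∞}

theorem isLDP_iff_expGrowth :
    IsLDP μ J ↔ ((∃ x, J x ≠ ⊤) ∧ ∀ c : ℝ≥0∞, c ≠ ⊤ → IsCompact {x | J x ≤ c}) ∧
      (∀ U, IsOpen U → -((⨅ x ∈ U, J x : ℝ≥0∞) : EReal) ≤ expGrowthInf fun n => μ n U) ∧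
      ∀ C, IsClosed C → expGrowthSup (fun n => μ n C) ≤ -((⨅ x ∈ C, J x : ℝ≥0∞) : EReal) := by
  have scaled_log (s : Set X) (n : ℕ) :
      (((n : ℝ)⁻¹ : ℝ) : EReal) * ENNReal.log (μ n s) = ENNReal.log (μ n s) / n := by
    rw [EReal.div_eq_inv_mul, EReal.coe_inv, EReal.coe_natCast]
  simp only [IsLDP, scaled_log, expGrowthInf, expGrowthSup]

theorem IsLDP.congr (h : IsLDP μ J) (hμν : μ =ᶠ[atTop] ν) : IsLDP ν J := by
  have eq_on (s : Set X) : (fun n => μ n s) =ᶠ[atTop] fun n => ν n s :=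
    hμν.mono fun n hn => congrArg (· s) hn
  simpa only [isLDP_iff_expGrowth, expGrowthInf_congr (eq_on _), expGrowthSup_congr (eq_on _)]
    using h

theorem expGrowthSup_measure_le_of_isCompact {K : Set X} (hK : IsCompact K) {b : EReal}
    (h : ∀ x ∈ K, ∃ U ∈ 𝓝 x, expGrowthSup (fun n => μ n U) ≤ b) :
    expGrowthSup (fun n => μ n K) ≤ b := by
  refine hK.induction_on (p := fun s => expGrowthSup (fun n => μ n s) ≤ b) ?_ ?_ ?_ ?_
  · simp only [measure_empty]
    exact expGrowthSup_zero.trans_le bot_le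
  · exact fun s t hst ht => (expGrowthSup_monotone fun n => measure_mono hst).trans ht
  · intro s t hs ht
    calc expGrowthSup (fun n => μ n (s ∪ t))
        ≤ expGrowthSup ((fun n => μ n s) + fun n => μ n t) :=
          expGrowthSup_monotone fun n => measure_union_le s t
      _ ≤ b := expGrowthSup_add.trans_le (sup_le hs ht)
  · intro x hx
    obtain ⟨U, hU, hUb⟩ := h x hx
    exact ⟨U, mem_nhdsWithin_of_mem_nhds hU, hUb⟩

theorem LowerBoundAt.of_tendsto {ι : Type*} {l : Filter ι} [l.NeBot] {x : ι → X} {y : X}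
    {e : ι → EReal} {e' : EReal} (hx : Tendsto x l (𝓝 y)) (he : Tendsto e l (𝓝 e'))
    (h : ∀ i, LowerBoundAt μ (x i) (e i)) : LowerBoundAt μ y e' := by
  intro U hU
  refine le_of_tendsto he.neg ?_
  filter_upwards [hx (interior_mem_nhds.2 hU)] with i hi
  exact (h i _ (isOpen_interior.mem_nhds hi)).trans
    (expGrowthInf_monotone fun n => measure_mono interior_subset)

theorem LowerBoundAt.le_of_expGrowthSup_le {x : X} {e a : EReal} (h : LowerBoundAt μ x e)
    {U : Set X} (hU : U ∈ 𝓝 x) (ha : expGrowthSup (fun n => μ n U) ≤ -a) : a ≤ e :=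
  EReal.neg_le_neg_iff.1 (((h U hU).trans expGrowthInf_le_expGrowthSup).trans ha)

theorem isClosed_setOf_le_of_local_bounds (hlower : ∀ x, LowerBoundAt μ x (J x))
    (hupper : ∀ x, ∀ a : ℝ, (a : EReal) < J x →
      ∃ U ∈ 𝓝 x, expGrowthSup (fun n => μ n U) ≤ -(a : EReal)) (c : ℝ≥0∞) :
    IsClosed {x | J x ≤ c} := by
  refine isOpen_compl_iff.1 (isOpen_iff_mem_nhds.2 fun x hx => ?_)
  obtain ⟨a, hca, hax⟩ := EReal.lt_iff_exists_real_btwn.1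
    (EReal.coe_ennreal_lt_coe_ennreal_iff.2 (not_le.1 hx))
  obtain ⟨U, hU, hUa⟩ := hupper x a hax
  filter_upwards [eventually_mem_nhds_iff.2 hU] with y hy
  exact not_le.2 (EReal.coe_ennreal_lt_coe_ennreal_iff.1
    (hca.trans_le ((hlower y).le_of_expGrowthSup_le hy hUa)))

theorem ExponentiallyTight.exists_isCompact_setOf_le_subset [T2Space X]
    (htight : ExponentiallyTight μ) (hlower : ∀ x, LowerBoundAt μ x (J x)) {c : ℝ≥0∞}
    (hc : c ≠ ⊤) : ∃ K, IsCompact K ∧ {x | J x ≤ c} ⊆ K := by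
  obtain ⟨a, hca, -⟩ := EReal.lt_iff_exists_real_btwn.1
    (EReal.coe_ennreal_lt_coe_ennreal_iff.2 hc.lt_top)
  obtain ⟨K, hK, hKa⟩ := htight a
  refine ⟨K, hK, fun x hx => by_contra fun hxK => ?_⟩
  have haJ := (hlower x).le_of_expGrowthSup_le (hK.isClosed.isOpen_compl.mem_nhds hxK) hKa
  exact (hca.trans_le haJ).not_ge (EReal.coe_ennreal_le_coe_ennreal_iff.2 hx)

theorem ExponentiallyTight.expGrowthSup_le_neg_iInf (htight : ExponentiallyTight μ)
    (hupper : ∀ x, ∀ a : ℝ, (a : EReal) < J x →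
      ∃ U ∈ 𝓝 x, expGrowthSup (fun n => μ n U) ≤ -(a : EReal))
    {C : Set X} (hC : IsClosed C) :
    expGrowthSup (fun n => μ n C) ≤ -((⨅ x ∈ C, J x : ℝ≥0∞) : EReal) := by
  rw [EReal.le_neg]
  refine le_of_forall_lt fun b hb => ?_
  obtain ⟨a, hba, ha⟩ := EReal.lt_iff_exists_real_btwn.1 hb
  obtain ⟨K, hK, hKa⟩ := htight a
  refine hba.trans_le (EReal.le_neg.1 ?_)
  calc expGrowthSup (fun n => μ n C)
      ≤ expGrowthSup ((fun n => μ n (K ∩ C)) + fun n => μ n Kᶜ) :=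
        expGrowthSup_monotone fun n => (measure_mono fun x hx => by
          by_cases hxK : x ∈ K <;> simp [hxK, hx]).trans (measure_union_le (K ∩ C) Kᶜ)
    _ ≤ -(a : EReal) := expGrowthSup_add.trans_le <| sup_le
        (expGrowthSup_measure_le_of_isCompact (hK.inter_right hC) fun x hx => hupper x a <|
          ha.trans_le (EReal.coe_ennreal_le_coe_ennreal_iff.2 (biInf_le J hx.2))) hKa

theorem ExponentiallyTight.isLDP [T2Space X] (htight : ExponentiallyTight μ)
    (hproper : ∃ x, J x ≠ ⊤) (hlower : ∀ x, LowerBoundAt μ x (J x))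
    (hupper : ∀ x, ∀ a : ℝ, (a : EReal) < J x →
      ∃ U ∈ 𝓝 x, expGrowthSup (fun n => μ n U) ≤ -(a : EReal)) :
    IsLDP μ J := by
  refine isLDP_iff_expGrowth.2 ⟨⟨hproper, fun c hc => ?_⟩, fun U hU => ?_, fun C hC =>
    htight.expGrowthSup_le_neg_iInf hupper hC⟩
  · obtain ⟨K, hK, hcK⟩ := htight.exists_isCompact_setOf_le_subset hlower hc
    exact hK.of_isClosed_subset (isClosed_setOf_le_of_local_bounds hlower hupper c) hcK
  · refine EReal.neg_le.2 (((le_max_right 0 _).trans EReal.coe_toENNReal_eq_max.ge).trans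
      (EReal.coe_ennreal_le_coe_ennreal_iff.2 (le_iInf₂ fun x hx => ?_)))
    rw [← EReal.toENNReal_coe (x := J x)]
    exact EReal.toENNReal_le_toENNReal (EReal.neg_le.1 (hlower x U (hU.mem_nhds hx)))

theorem IsLDP.exists_eq_iInf_fiber [T2Space X] {Y : Type*} [TopologicalSpace Y] [T1Space Y]
    (h : IsLDP μ J) {f : X → Y} (hf : Continuous f) {y : Y}
    (hy : ⨅ x ∈ f ⁻¹' {y}, J x ≠ ⊤) : ∃ x, f x = y ∧ J x = ⨅ x ∈ f ⁻¹' {y}, J x := by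
  obtain ⟨x₀, hx₀, hJx₀⟩ : ∃ x₀ ∈ f ⁻¹' {y}, J x₀ ≠ ⊤ := by
    simpa only [ne_eq, iInf_eq_top, not_forall, exists_prop] using hy
  have hJ : LowerSemicontinuous J := lowerSemicontinuous_iff_isClosed_preimage.2 fun c => by
    by_cases hc : c = ⊤
    · simp only [hc, Iic_top, preimage_univ, isClosed_univ]
    · exact (h.1.2 c hc).isClosed
  have hnonempty : ({x | J x ≤ J x₀} ∩ f ⁻¹' {y}).Nonempty := ⟨x₀, le_refl (J x₀), hx₀⟩
  have hcompact : IsCompact ({x | J x ≤ J x₀} ∩ f ⁻¹' {y}) :=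
    (h.1.2 _ hJx₀).inter_right (isClosed_singleton.preimage hf)
  obtain ⟨x, ⟨hxx₀, hxy⟩, hmin⟩ :=
    (hJ.lowerSemicontinuousOn _).exists_isMinOn hnonempty hcompact
  refine ⟨x, hxy, le_antisymm (le_iInf₂ fun z hz => ?_) (biInf_le J hxy)⟩
  rcases le_total (J z) (J x₀) with hz₀ | hz₀
  · exact hmin ⟨hz₀, hz⟩
  · exact hxx₀.trans hz₀

theorem IsLDP.map [T2Space X] {Y : Type*} [TopologicalSpace Y] [T1Space Y] [MeasurableSpace Y]
    [OpensMeasurableSpace Y] (h : IsLDP μ J) {f : X → Y} (hf : Continuous f)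
    (hfm : Measurable f) : IsLDP (fun n => (μ n).map f) fun y => ⨅ x ∈ f ⁻¹' {y}, J x := by
  have iInf_fiber (s : Set Y) : ⨅ y ∈ s, ⨅ x ∈ f ⁻¹' {y}, J x = ⨅ x ∈ f ⁻¹' s, J x := by
    rw [← biUnion_preimage_singleton, iInf_iUnion]
    simp only [iInf_iUnion]
  have setOf_le (c : ℝ≥0∞) (hc : c ≠ ⊤) :
      {y | ⨅ x ∈ f ⁻¹' {y}, J x ≤ c} = f '' {x | J x ≤ c} := by
    ext y
    refine ⟨fun hy => ?_, ?_⟩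
    · obtain ⟨x, hxy, hx⟩ := h.exists_eq_iInf_fiber hf (ne_top_of_le_ne_top hc hy)
      exact ⟨x, hx.trans_le hy, hxy⟩
    · rintro ⟨x, hx, rfl⟩
      exact (biInf_le J (mem_singleton (f x))).trans hx
  obtain ⟨⟨⟨x, hx⟩, hgood⟩, hlower, hupper⟩ := isLDP_iff_expGrowth.1 h
  refine isLDP_iff_expGrowth.2 ⟨⟨⟨f x, ne_top_of_le_ne_top hx (biInf_le J (mem_singleton (f x)))⟩,
    fun c hc => setOf_le c hc ▸ (hgood c hc).image hf⟩, fun U hU => ?_, fun C hC => ?_⟩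
  · simp only [iInf_fiber, Measure.map_apply hfm hU.measurableSet]
    exact hlower _ (hU.preimage hf)
  · simp only [iInf_fiber, Measure.map_apply hfm hC.measurableSet]
    exact hupper _ (hC.preimage hf)

end LargeDeviations

section NarrowTopology

open TopologicalSpace BoundedContinuousFunction

theorem exists_countable_isOpen_measure_eq_iSup (X : Type*) [TopologicalSpace X]
    [SecondCountableTopology X] [MeasurableSpace X] :
    ∃ B : Set (Set X), B.Countable ∧ (∀ V ∈ B, IsOpen V) ∧
      ∀ (μ : Measure X) {G : Set X}, IsOpen G → μ G = ⨆ V ∈ {V ∈ B | V ⊆ G}, μ V := by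
  let 𝒯 : Set (Set (Set X)) := {t | t.Finite ∧ t ⊆ countableBasis X}
  have h𝒯 : (sUnion '' 𝒯).Countable :=
    (countable_ofPred_finite_subset (countable_countableBasis X)).image _
  refine ⟨sUnion '' 𝒯, h𝒯, ?_, fun μ G hG => ?_⟩
  · rintro _ ⟨t, ht, rfl⟩
    exact isOpen_sUnion fun v hv => isOpen_of_mem_countableBasis (ht.2 hv)
  · have hdirected : DirectedOn (· ⊆ ·) {V ∈ sUnion '' 𝒯 | V ⊆ G} := by
      rintro _ ⟨⟨s, hs, rfl⟩, hsG⟩ _ ⟨⟨t, ht, rfl⟩, htG⟩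
      exact ⟨⋃₀ (s ∪ t), ⟨⟨s ∪ t, ⟨hs.1.union ht.1, union_subset hs.2 ht.2⟩, rfl⟩,
        sUnion_union s t ▸ union_subset hsG htG⟩, sUnion_mono subset_union_left,
        sUnion_mono subset_union_right⟩
    have hG_eq : G = ⋃ V ∈ {V ∈ sUnion '' 𝒯 | V ⊆ G}, V := by
      refine Subset.antisymm (fun x hx => ?_) (iUnion₂_subset fun V hV => hV.2)
      obtain ⟨v, hv, hxv, hvG⟩ := (isBasis_countableBasis X).exists_subset_of_mem_open hx hG
      exact mem_biUnion ⟨⟨{v}, ⟨finite_singleton v, singleton_subset_iff.2 hv⟩, sUnion_singleton v⟩,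
        hvG⟩ hxv
    conv_lhs => rw [hG_eq]
    exact measure_biUnion_eq_iSup (h𝒯.mono (sep_subset _ _)) hdirected

variable {X : Type*} [TopologicalSpace X] [MeasurableSpace X] [OpensMeasurableSpace X]

theorem tendsto_measure_compl_of_tendsto_integral {ι : Type*} {l : Filter ι}
    {μ : ι → Measure (ProbabilityMeasure X)} {q : ProbabilityMeasure X}
    (h : ∀ f : X →ᵇ ℝ, ∀ ε > 0, Tendsto (fun i => μ i {ρ | ε ≤ |∫ x, f x ∂(ρ : Measure X) -
      ∫ x, f x ∂(q : Measure X)|}) l (𝓝 0)) {U : Set (ProbabilityMeasure X)} (hU : U ∈ 𝓝 q) :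
    Tendsto (fun i => μ i Uᶜ) l (𝓝 0) := by
  let 𝓕 : Filter (ProbabilityMeasure X) :=
    { sets := {V | Tendsto (fun i => μ i Vᶜ) l (𝓝 0)}
      univ_sets := by simp only [mem_ofPred_eq, compl_univ, measure_empty, tendsto_const_nhds]
      sets_of_superset := fun hV hVW => tendsto_of_tendsto_of_tendsto_of_le_of_le
        tendsto_const_nhds hV (fun _ => zero_le) fun i =>
          measure_mono (compl_subset_compl.2 hVW)
      inter_sets := fun {V W} hV hW => by
        refine tendsto_of_tendsto_of_tendsto_of_le_of_le tendsto_const_nhds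
          (by simpa only [add_zero] using! hV.add hW) (fun _ => zero_le) fun i => ?_
        exact compl_inter V W ▸ measure_union_le Vᶜ Wᶜ }
  have h𝓕 : Tendsto (fun ρ : ProbabilityMeasure X => ρ) 𝓕 (𝓝 q) := by
    refine ProbabilityMeasure.tendsto_iff_forall_integral_tendsto.2 fun f =>
      Metric.tendsto_nhds.2 fun ε hε => ?_
    change Tendsto (fun i => μ i {ρ | _}ᶜ) l (𝓝 0)
    simpa only [Real.dist_eq, compl_ofPred, not_lt] using h f ε hε
  exact h𝓕 hU

variable [HasOuterApproxClosed X]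

theorem le_liminf_measure_of_tendsto_lintegral_apprSeq {ι : Type*} {l : Filter ι}
    {ρs : ι → ProbabilityMeasure X} {ρ : ProbabilityMeasure X} {V : Set X} (hV : IsOpen V)
    (h : ∀ m, Tendsto (fun i => ∫⁻ x, hV.isClosed_compl.apprSeq m x ∂(ρs i : Measure X)) l
      (𝓝 (∫⁻ x, hV.isClosed_compl.apprSeq m x ∂(ρ : Measure X)))) :
    (ρ : Measure X) V ≤ l.liminf fun i => (ρs i : Measure X) V := by
  rcases l.eq_or_neBot with rfl | _
  · simp only [liminf_bot, le_top]
  refine le_measure_liminf_of_limsup_measure_compl_le hV.measurableSet ?_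
  refine ge_of_tendsto' (HasOuterApproxClosed.tendsto_lintegral_apprSeq hV.isClosed_compl
    (ρ : Measure X)) fun m => ?_
  rw [← (h m).limsup_eq]
  exact limsup_le_limsup (Eventually.of_forall fun i =>
    HasOuterApproxClosed.measure_le_lintegral hV.isClosed_compl (ρs i : Measure X) m)

theorem exists_countable_isInducing_lintegral [SecondCountableTopology X] :
    ∃ S : Set (X →ᵇ ℝ≥0), S.Countable ∧
      IsInducing fun (ρ : ProbabilityMeasure X) (f : S) => ∫⁻ x, f.1 x ∂(ρ : Measure X) := by
  obtain ⟨B, hB, hBopen, hBsup⟩ := exists_countable_isOpen_measure_eq_iSup X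
  let S : Set (X →ᵇ ℝ≥0) :=
    ⋃ (V) (hV : V ∈ B), range fun m => (hBopen V hV).isClosed_compl.apprSeq m
  have hS : S.Countable := hB.biUnion fun V hV => countable_range _
  have : Countable S := hS.to_subtype
  let Φ : ProbabilityMeasure X → S → ℝ≥0∞ := fun ρ f => ∫⁻ x, f.1 x ∂(ρ : Measure X)
  have hΦ : Continuous Φ := continuous_pi fun f =>
    ProbabilityMeasure.continuous_lintegral_boundedContinuousFunction f.1
  refine ⟨S, hS, isInducing_iff_nhds.2 fun ρ => le_antisymm (hΦ.tendsto ρ).le_comap ?_⟩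
  change Tendsto (fun ρ' => ρ') (comap Φ (𝓝 (Φ ρ))) (𝓝 ρ)
  refine tendsto_of_forall_isOpen_le_liminf' fun G hG => ?_
  rw [hBsup ρ hG]
  refine iSup₂_le fun V hV => ?_
  refine (le_liminf_measure_of_tendsto_lintegral_apprSeq (hBopen V hV.1) fun m => ?_).trans
    (liminf_le_liminf (Eventually.of_forall fun ρ' => measure_mono hV.2))
  let f : S := ⟨(hBopen V hV.1).isClosed_compl.apprSeq m, mem_iUnion₂.2 ⟨V, hV.1, m, rfl⟩⟩
  exact tendsto_pi_nhds.1 (tendsto_comap (f := Φ) (x := 𝓝 (Φ ρ))) f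

instance opensMeasurableSpace_probabilityMeasure [SecondCountableTopology X] :
    OpensMeasurableSpace (ProbabilityMeasure X) := by
  obtain ⟨S, hS, hind⟩ := exists_countable_isInducing_lintegral (X := X)
  have : Countable S := hS.to_subtype
  have hmeas : Measurable fun (ρ : ProbabilityMeasure X) (f : S) =>
      ∫⁻ x, f.1 x ∂(ρ : Measure X) :=
    measurable_pi_lambda _ fun f => (Measure.measurable_lintegral
      f.1.continuous.measurable.coe_nnreal_ennreal).comp measurable_subtype_coe
  refine ⟨MeasurableSpace.generateFrom_le fun U hU => ?_⟩
  obtain ⟨V, hV, rfl⟩ := hind.isOpen_iff.1 hU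
  exact hmeas hV.measurableSet

end NarrowTopology

section Tightness

theorem isCompact_union_iUnion_of_eventually_subset {X ι : Type*} [TopologicalSpace X] {S : Set X}
    (hS : IsCompact S) {K : ι → Set X} (hK : ∀ i, IsCompact (K i))
    (h : ∀ V ∈ 𝓝ˢ S, ∀ᶠ i in cofinite, K i ⊆ V) : IsCompact (S ∪ ⋃ i, K i) := by
  refine isCompact_of_finite_subcover fun {α} U hU hcover => ?_
  obtain ⟨t, ht⟩ := hS.elim_finite_subcover U hU (subset_union_left.trans hcover)
  let V : Set X := ⋃ a ∈ t, U a
  have hV : V ∈ 𝓝ˢ S := (isOpen_biUnion fun a _ => hU a).mem_nhdsSet.2 ht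
  have hI : {i | ¬K i ⊆ V}.Finite := h V hV
  obtain ⟨t', ht'⟩ := (hI.isCompact_biUnion fun i _ => hK i).elim_finite_subcover U hU
    ((iUnion₂_subset fun i _ => subset_iUnion K i).trans (subset_union_right.trans hcover))
  refine ⟨t ∪ t', ?_⟩
  rw [Finset.set_biUnion_union]
  refine union_subset (ht.trans subset_union_left) (iUnion_subset fun i => ?_)
  by_cases hi : K i ⊆ V
  · exact hi.trans subset_union_left
  · exact ((subset_biUnion_of_mem (u := K) hi).trans ht').trans subset_union_right

theorem exists_tendsto_atTop_of_forall_eventually {P : ℕ → ℕ → Prop} (h₀ : ∀ n, P n 0)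
    (h : ∀ k, ∀ᶠ n in atTop, P n k) :
    ∃ k : ℕ → ℕ, Tendsto k atTop atTop ∧ ∀ n, P n (k n) := by
  refine ⟨fun n => Nat.findGreatest (P n) n, tendsto_atTop.2 fun m => ?_, fun n =>
    Nat.findGreatest_spec n.zero_le (h₀ n)⟩
  filter_upwards [h m, eventually_ge_atTop m] with n hn hmn
  exact Nat.le_findGreatest hmn hn

theorem isTightMeasureSet_singleton_iff {X : Type*} [TopologicalSpace X] [MeasurableSpace X]
    {μ : Measure X} :
    IsTightMeasureSet {μ} ↔ ∀ ε, 0 < ε → ∃ K, IsCompact K ∧ μ Kᶜ ≤ ε := by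
  simp only [isTightMeasureSet_iff_exists_isCompact_measure_compl_le, mem_singleton_iff,
    forall_eq]

/-- Narrow convergence of a sequence of measures, tested against bounded continuous functions. It is
stated for plain measures so that it applies to averages over `n` points including `n = 0`. -/
def TendstoNarrowly {X : Type*} [TopologicalSpace X] [MeasurableSpace X] (ν : ℕ → Measure X)
    (ν₀ : Measure X) : Prop :=
  ∀ f : BoundedContinuousFunction X ℝ, Tendsto (fun n => ∫ x, f x ∂ν n) atTop (𝓝 (∫ x, f x ∂ν₀))

theorem TendstoNarrowly.tendsto_finiteMeasure {X : Type*} [TopologicalSpace X] [MeasurableSpace X]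
    [OpensMeasurableSpace X] {ν : ℕ → Measure X} [∀ n, IsFiniteMeasure (ν n)] {ν₀ : Measure X}
    [IsFiniteMeasure ν₀] (h : TendstoNarrowly ν ν₀) :
    Tendsto (β := FiniteMeasure X) (fun n => ⟨ν n, inferInstance⟩) atTop
      (𝓝 ⟨ν₀, inferInstance⟩) :=
  FiniteMeasure.tendsto_iff_forall_integral_tendsto.2 h

variable {X : Type*} [PseudoMetricSpace X] [MeasurableSpace X] [OpensMeasurableSpace X]

theorem eventually_exists_isCompact_subset_cthickening {ν : ℕ → Measure X}
    [∀ n, IsFiniteMeasure (ν n)] {ν₀ : Measure X} [IsFiniteMeasure ν₀] (hν : TendstoNarrowly ν ν₀)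
    (htight : ∀ n, IsTightMeasureSet {ν n}) {S : Set X} {ε : ℝ≥0∞}
    (hS : ν₀ Sᶜ < ε) {δ : ℝ} (hδ : 0 < δ) :
    ∀ᶠ n in atTop, ∃ K, IsCompact K ∧ ν n Kᶜ ≤ ε ∧ K ⊆ Metric.cthickening δ S := by
  have hlimsup : limsup (fun n => ν n (Metric.thickening δ S)ᶜ) atTop < ε :=
    (FiniteMeasure.limsup_measure_closed_le_of_tendsto hν.tendsto_finiteMeasure
      Metric.isOpen_thickening.isClosed_compl).trans_lt
      ((measure_mono (compl_subset_compl.2 (Metric.self_subset_thickening hδ S))).trans_lt hS)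
  filter_upwards [eventually_lt_of_limsup_lt hlimsup] with n hn
  obtain ⟨η, hη, hlt⟩ := ENNReal.lt_iff_exists_add_pos_lt.1 hn
  obtain ⟨K, hK, hKη⟩ := isTightMeasureSet_singleton_iff.1 (htight n) η (ENNReal.coe_pos.2 hη)
  refine ⟨K ∩ Metric.cthickening δ S, hK.inter_right Metric.isClosed_cthickening, ?_,
    inter_subset_right⟩
  calc ν n (K ∩ Metric.cthickening δ S)ᶜ
      ≤ ν n ((Metric.thickening δ S)ᶜ ∪ Kᶜ) := measure_mono <| by
        rw [compl_inter, union_comm]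
        exact union_subset_union_left _
          (compl_subset_compl.2 (Metric.thickening_subset_cthickening δ S))
    _ ≤ ν n (Metric.thickening δ S)ᶜ + η :=
        (measure_union_le _ _).trans (add_le_add_right hKη _)
    _ ≤ ε := hlt.le

/- Le Cam: no completeness is needed because the compact sets for the individual measures can be
chosen inside shrinking neighbourhoods of a compact set for the limit. -/
theorem isTightMeasureSet_range_of_tendstoNarrowly {ν : ℕ → Measure X} [∀ n, IsFiniteMeasure (ν n)]
    {ν₀ : Measure X} [IsFiniteMeasure ν₀] (hν : TendstoNarrowly ν ν₀)
    (htight : ∀ n, IsTightMeasureSet {ν n})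
    (htight₀ : IsTightMeasureSet {ν₀}) :
    IsTightMeasureSet (range ν) := by
  refine isTightMeasureSet_iff_exists_isCompact_measure_compl_le.2 fun ε hε => ?_
  obtain ⟨ε', hε'₀, hε'⟩ := exists_between hε
  obtain ⟨S, hS, hSε'⟩ := isTightMeasureSet_singleton_iff.1 htight₀ ε' hε'₀
  obtain ⟨k, hk, hP⟩ := exists_tendsto_atTop_of_forall_eventually
    (P := fun n k => ∃ K, IsCompact K ∧ ν n Kᶜ ≤ ε ∧
      (k ≠ 0 → K ⊆ Metric.cthickening (k : ℝ)⁻¹ S))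
    (fun n => by
      obtain ⟨K, hK, hKε⟩ := isTightMeasureSet_singleton_iff.1 (htight n) ε hε
      exact ⟨K, hK, hKε, fun h => absurd rfl h⟩)
    (fun k => by
      rcases Nat.eq_zero_or_pos k with rfl | hk
      · refine Eventually.of_forall fun n => ?_
        obtain ⟨K, hK, hKε⟩ := isTightMeasureSet_singleton_iff.1 (htight n) ε hε
        exact ⟨K, hK, hKε, fun h => absurd rfl h⟩
      · filter_upwards [eventually_exists_isCompact_subset_cthickening hν htight
          (hSε'.trans_lt hε') (inv_pos.2 (Nat.cast_pos.2 hk))] with n ⟨K, hK, hKε, hKS⟩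
        exact ⟨K, hK, hKε, fun _ => hKS⟩)
  choose K hK hKε hKS using hP
  refine ⟨S ∪ ⋃ n, K n, isCompact_union_iUnion_of_eventually_subset hS hK fun V hV => ?_, ?_⟩
  · obtain ⟨δ, hδ, hδV⟩ := (Metric.hasBasis_nhdsSet_cthickening hS).mem_iff.1 hV
    rw [Nat.cofinite_eq_atTop]
    filter_upwards [hk.eventually (eventually_ge_atTop ⌈δ⁻¹⌉₊), hk.eventually_ne_atTop 0]
      with n hn hn₀
    refine (hKS n hn₀).trans ((Metric.cthickening_mono ?_ S).trans hδV)
    exact inv_le_of_inv_le₀ hδ ((Nat.le_ceil _).trans (Nat.cast_le.2 hn))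
  · rintro _ ⟨n, rfl⟩
    exact (measure_mono (compl_subset_compl.2 ((subset_iUnion K n).trans
      subset_union_right))).trans (hKε n)

end Tightness

section EmpiricalMeasure

variable {Z : Type*} [MeasurableSpace Z] {n : ℕ}

/-- The average `n⁻¹ ∑ᵢ mᵢ` of `n` measures; it is the zero measure for `n = 0`. -/
def averageMeasure (m : Fin n → Measure Z) : Measure Z :=
  (n : ℝ≥0∞)⁻¹ • ∑ i, m i

theorem averageMeasure_apply (m : Fin n → Measure Z) (s : Set Z) :
    averageMeasure m s = (n : ℝ≥0∞)⁻¹ * ∑ i, m i s := by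
  simp only [averageMeasure, Measure.smul_apply, Measure.coe_finsetSum, Finset.sum_apply,
    smul_eq_mul]

instance isFiniteMeasure_averageMeasure (m : Fin n → Measure Z) [∀ i, IsFiniteMeasure (m i)] :
    IsFiniteMeasure (averageMeasure m) := by
  rcases eq_or_ne n 0 with rfl | hn
  · simpa only [averageMeasure, Finset.univ_eq_empty, Finset.sum_empty, smul_zero] using
      isFiniteMeasureZero
  · exact Measure.smul_finite _ (ENNReal.inv_ne_top.2 (Nat.cast_ne_zero.2 hn))

theorem isProbabilityMeasure_averageMeasure (hn : n ≠ 0) (m : Fin n → Measure Z)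
    [∀ i, IsProbabilityMeasure (m i)] : IsProbabilityMeasure (averageMeasure m) := by
  refine ⟨?_⟩
  simp only [averageMeasure_apply, measure_univ, Finset.sum_const, Finset.card_univ,
    Fintype.card_fin, nsmul_eq_mul, mul_one]
  exact ENNReal.inv_mul_cancel (Nat.cast_ne_zero.2 hn) (ENNReal.natCast_ne_top n)

theorem integral_averageMeasure {m : Fin n → Measure Z} {f : Z → ℝ}
    (hf : ∀ i, Integrable f (m i)) :
    ∫ z, f z ∂averageMeasure m = (n : ℝ)⁻¹ * ∑ i, ∫ z, f z ∂m i := by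
  rw [averageMeasure, integral_smul_measure, integral_finsetSum_measure fun i _ => hf i,
    ENNReal.toReal_inv, ENNReal.toReal_natCast, smul_eq_mul]

theorem integral_averageMeasure_dirac (z : Fin n → Z) {f : Z → ℝ} (hf : Measurable f) :
    ∫ w, f w ∂averageMeasure (fun i => Measure.dirac (z i)) = (n : ℝ)⁻¹ * ∑ i, f (z i) := by
  rw [integral_averageMeasure fun i =>
    integrable_dirac' hf.stronglyMeasurable (by simp only [enorm_lt_top])]
  simp only [integral_dirac' f _ hf.stronglyMeasurable]

variable [Nonempty Z]

/-- The empirical measure `n⁻¹ ∑ᵢ δ_{zᵢ}` of `n` points. At `n = 0` it takes the junk value of an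
arbitrary Dirac measure. -/
def empiricalMeasure (z : Fin n → Z) : ProbabilityMeasure Z :=
  if hn : n = 0 then diracProba (Classical.arbitrary Z)
  else ⟨averageMeasure fun i => Measure.dirac (z i), isProbabilityMeasure_averageMeasure hn _⟩

theorem coe_empiricalMeasure (hn : n ≠ 0) (z : Fin n → Z) :
    (empiricalMeasure z : Measure Z) = averageMeasure fun i => Measure.dirac (z i) :=
  congrArg ((↑) : ProbabilityMeasure Z → Measure Z) (dif_neg hn)

theorem natCast_mul_integral_empiricalMeasure (z : Fin n → Z) {f : Z → ℝ} (hf : Measurable f) :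
    (n : ℝ) * ∫ w, f w ∂(empiricalMeasure z : Measure Z) = ∑ i, f (z i) := by
  rcases eq_or_ne n 0 with rfl | hn
  · simp only [Nat.cast_zero, zero_mul, Finset.univ_eq_empty, Finset.sum_empty]
  · rw [coe_empiricalMeasure hn, integral_averageMeasure_dirac z hf,
      mul_inv_cancel_left₀ (Nat.cast_ne_zero.2 hn)]

theorem measurable_empiricalMeasure :
    Measurable (empiricalMeasure : (Fin n → Z) → ProbabilityMeasure Z) := by
  rcases eq_or_ne n 0 with rfl | hn
  · exact Subsingleton.measurable
  · have hemp : (empiricalMeasure : (Fin n → Z) → ProbabilityMeasure Z) = fun z =>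
        ⟨averageMeasure fun i => Measure.dirac (z i), isProbabilityMeasure_averageMeasure hn _⟩ :=
      funext fun z => dif_neg hn
    rw [hemp]
    refine Measurable.subtype_mk (Measure.measurable_of_measurable_coe _ fun s hs => ?_)
    simp only [averageMeasure_apply]
    exact (Finset.measurable_fun_sum _ fun i _ => (Measure.measurable_coe hs).comp
      (Measure.measurable_dirac.comp (measurable_pi_apply i))).const_mul _

/-- The law of the empirical measure of independent random points `Zᵢ` with distributions `mᵢ`. -/
def empiricalLaw (m : Fin n → Measure Z) : Measure (ProbabilityMeasure Z) :=
  (Measure.pi m).map empiricalMeasure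

instance isProbabilityMeasure_empiricalLaw (m : Fin n → Measure Z)
    [∀ i, IsProbabilityMeasure (m i)] : IsProbabilityMeasure (empiricalLaw m) :=
  Measure.isProbabilityMeasure_map measurable_empiricalMeasure.aemeasurable

end EmpiricalMeasure

section ExponentialTilting

theorem pi_withDensity {ι : Type*} [Fintype ι] {Z : ι → Type*} [∀ i, MeasurableSpace (Z i)]
    (μ : ∀ i, Measure (Z i)) [∀ i, IsProbabilityMeasure (μ i)] {g : ∀ i, Z i → ℝ≥0∞}
    (hg : ∀ i, Measurable (g i)) [∀ i, SigmaFinite ((μ i).withDensity (g i))] :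
    Measure.pi (fun i => (μ i).withDensity (g i)) =
      (Measure.pi μ).withDensity fun z => ∏ i, g i (z i) := by
  refine Measure.pi_eq fun s hs => ?_
  have hgs (i) : Measurable ((s i).indicator (g i)) := (hg i).indicator (hs i)
  have indicator_prod (z : ∀ i, Z i) : (univ.pi s).indicator (fun z => ∏ i, g i (z i)) z =
      ∏ i, (s i).indicator (g i) (z i) := by
    by_cases hz : z ∈ univ.pi s
    · rw [indicator_of_mem hz]
      exact Finset.prod_congr rfl fun i _ => (indicator_of_mem (hz i (mem_univ i)) _).symm
    · obtain ⟨i, hi⟩ : ∃ i, z i ∉ s i := by simpa only [mem_univ_pi, not_forall] using hz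
      rw [indicator_of_notMem hz, Finset.prod_eq_zero (Finset.mem_univ i)
        (indicator_of_notMem hi _)]
  calc (Measure.pi μ).withDensity (fun z => ∏ i, g i (z i)) (univ.pi s)
      = ∫⁻ z, ∏ i, (s i).indicator (g i) (z i) ∂Measure.pi μ := by
        rw [withDensity_apply _ (.univ_pi hs), ← lintegral_indicator (.univ_pi hs)]
        exact lintegral_congr indicator_prod
    _ = ∏ i, ∫⁻ z, (s i).indicator (g i) (z i) ∂Measure.pi μ :=
        lintegral_prod_eq_prod_lintegral_of_indepFun Finset.univ _
          (iIndepFun_pi fun i => (hgs i).aemeasurable) fun i =>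
            (hgs i).comp (measurable_pi_apply i)
    _ = ∏ i, (μ i).withDensity (g i) (s i) := Finset.prod_congr rfl fun i _ => by
        rw [(measurePreserving_eval μ i).lintegral_comp (hgs i), lintegral_indicator (hs i),
          withDensity_apply _ (hs i)]

theorem map_withDensity_comp {Z W : Type*} [MeasurableSpace Z] [MeasurableSpace W] {f : Z → W}
    (hf : Measurable f) (μ : Measure Z) {g : W → ℝ≥0∞} (hg : Measurable g) :
    (μ.withDensity fun z => g (f z)).map f = (μ.map f).withDensity g := by
  ext s hs
  rw [Measure.map_apply hf hs, withDensity_apply _ (hf hs), withDensity_apply _ hs,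
    setLIntegral_map hs hg hf]

theorem measurable_integral_probabilityMeasure {Z : Type*} [MeasurableSpace Z] {F : Z → ℝ}
    (hF : Measurable F) : Measurable fun ρ : ProbabilityMeasure Z => ∫ z, F z ∂(ρ : Measure Z) := by
  let κ : Kernel (ProbabilityMeasure Z) Z := ⟨fun ρ => ρ, measurable_subtype_coe⟩
  have : IsMarkovKernel κ := ⟨fun ρ => ρ.2⟩
  exact (hF.stronglyMeasurable.integral_kernel (κ := κ)).measurable

theorem tilted_eq_withDensity_exp_sub_cgf {Z : Type*} [MeasurableSpace Z] {m : Measure Z}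
    [NeZero m] {F : Z → ℝ} (hF : Integrable (fun z => Real.exp (F z)) m) :
    m.tilted F = m.withDensity fun z => ENNReal.ofReal (Real.exp (F z - cgf F m 1)) := by
  have exp_cgf : Real.exp (cgf F m 1) = ∫ z, Real.exp (F z) ∂m := by
    simpa only [mgf, one_mul] using exp_cgf (X := F) (t := 1) (μ := m) (by simpa only [one_mul])
  simp only [Measure.tilted, Real.exp_sub, exp_cgf]

variable {Z : Type*} [MeasurableSpace Z] [Nonempty Z] {n : ℕ} {m : Fin n → Measure Z}
  [∀ i, IsProbabilityMeasure (m i)] {F : Z → ℝ}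

theorem empiricalLaw_tilted (hF : Measurable F)
    (hexp : ∀ i, Integrable (fun z => Real.exp (F z)) (m i)) :
    empiricalLaw (fun i => (m i).tilted F) = (empiricalLaw m).withDensity fun ρ =>
      ENNReal.ofReal (Real.exp (n * ∫ z, F z ∂(ρ : Measure Z) - ∑ i, cgf F (m i) 1)) := by
  let g (i : Fin n) (z : Z) : ℝ≥0∞ := ENNReal.ofReal (Real.exp (F z - cgf F (m i) 1))
  have hg (i) : Measurable (g i) := (hF.sub_const _).exp.ennreal_ofReal
  have htilt (i) : (m i).tilted F = (m i).withDensity (g i) :=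
    tilted_eq_withDensity_exp_sub_cgf (hexp i)
  have : ∀ i, IsProbabilityMeasure ((m i).withDensity (g i)) := fun i =>
    htilt i ▸ isProbabilityMeasure_tilted (hexp i)
  let D (ρ : ProbabilityMeasure Z) : ℝ≥0∞ :=
    ENNReal.ofReal (Real.exp (n * ∫ z, F z ∂(ρ : Measure Z) - ∑ i, cgf F (m i) 1))
  have hD : Measurable D :=
    (((measurable_integral_probabilityMeasure hF).const_mul _).sub_const _).exp.ennreal_ofReal
  have prod_g (z : Fin n → Z) : ∏ i, g i (z i) = D (empiricalMeasure z) := by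
    dsimp only [D]
    rw [natCast_mul_integral_empiricalMeasure z hF, ← Finset.sum_sub_distrib, Real.exp_sum,
      ENNReal.ofReal_prod_of_nonneg fun i _ => (Real.exp_pos _).le]
  rw [empiricalLaw, funext htilt, pi_withDensity m hg, funext prod_g]
  exact map_withDensity_comp (g := D) measurable_empiricalMeasure (Measure.pi m) hD

theorem empiricalLaw_ge_le_exp_cgf (hF : Measurable F)
    (hexp : ∀ i, Integrable (fun z => Real.exp (F z)) (m i)) (c : ℝ) :
    empiricalLaw m {ρ | c ≤ ∫ z, F z ∂(ρ : Measure Z)} ≤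
      ENNReal.ofReal (Real.exp (∑ i, cgf F (m i) 1 - n * c)) := by
  have : ∀ i, IsProbabilityMeasure ((m i).tilted F) := fun i =>
    isProbabilityMeasure_tilted (hexp i)
  let S : Set (ProbabilityMeasure Z) := {ρ | c ≤ ∫ z, F z ∂(ρ : Measure Z)}
  have hS : MeasurableSet S :=
    measurableSet_le measurable_const (measurable_integral_probabilityMeasure hF)
  have h : ENNReal.ofReal (Real.exp (n * c - ∑ i, cgf F (m i) 1)) * empiricalLaw m S ≤ 1 :=
    calc ENNReal.ofReal (Real.exp (n * c - ∑ i, cgf F (m i) 1)) * empiricalLaw m S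
        ≤ empiricalLaw (fun i => (m i).tilted F) S := by
          rw [empiricalLaw_tilted hF hexp, withDensity_apply _ hS, ← setLIntegral_const]
          refine setLIntegral_mono' hS fun ρ hρ => ?_
          gcongr
          exact hρ
      _ ≤ 1 := prob_le_one
  rw [← neg_sub, Real.exp_neg, ENNReal.ofReal_inv_of_pos (Real.exp_pos _)]
  exact ENNReal.le_inv_iff_mul_le.2 (mul_comm _ (empiricalLaw m S) ▸ h)

theorem empiricalLaw_tilted_apply_le (hF : Measurable F)
    (hexp : ∀ i, Integrable (fun z => Real.exp (F z)) (m i)) {c : ℝ}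
    {s : Set (ProbabilityMeasure Z)} (hc : ∀ ρ ∈ s, ∫ z, F z ∂(ρ : Measure Z) ≤ c) :
    empiricalLaw (fun i => (m i).tilted F) s ≤
      ENNReal.ofReal (Real.exp (n * c - ∑ i, cgf F (m i) 1)) * empiricalLaw m s := by
  rw [empiricalLaw_tilted hF hexp, withDensity_apply' _ s, ← setLIntegral_const]
  refine setLIntegral_mono measurable_const fun ρ hρ => ?_
  gcongr
  exact hc ρ hρ

end ExponentialTilting

section LawOfLargeNumbers

variable {Z : Type*} [MeasurableSpace Z] [Nonempty Z]

theorem empiricalLaw_abs_sub_ge_le_div {n : ℕ} (hn : n ≠ 0) {m : Fin n → Measure Z}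
    [∀ i, IsProbabilityMeasure (m i)] {f : Z → ℝ} (hf : Measurable f) {M : ℝ}
    (hM : ∀ z, |f z| ≤ M) {ε : ℝ} (hε : 0 < ε) :
    empiricalLaw m {ρ | ε ≤ |∫ z, f z ∂(ρ : Measure Z) - ∫ z, f z ∂averageMeasure m|} ≤
      ENNReal.ofReal (M ^ 2 / ε ^ 2 / n) := by
  have hn₀ : (0 : ℝ) < n := Nat.cast_pos.2 (Nat.pos_of_ne_zero hn)
  have hmem (i) : MemLp f 2 (m i) := MemLp.of_bound hf.aestronglyMeasurable M (.of_forall hM)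
  have hint (i) : Integrable f (m i) := (hmem i).integrable one_le_two
  let X : (Fin n → Z) → ℝ := ∑ i, fun z => f (z i)
  have hX : MemLp X 2 (Measure.pi m) := memLp_finsetSum' _ fun i _ =>
    (hmem i).comp_measurePreserving (measurePreserving_eval m i)
  have integral_X : ∫ z, X z ∂Measure.pi m = n * ∫ z, f z ∂averageMeasure m := by
    simp only [X, Finset.sum_apply]
    rw [integral_finsetSum _ fun i _ => integrable_comp_eval (hint i),
      integral_averageMeasure hint, mul_inv_cancel_left₀ hn₀.ne']
    exact Finset.sum_congr rfl fun i _ => integral_comp_eval hf.aestronglyMeasurable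
  have variance_X : Var[X; Measure.pi m] ≤ n * M ^ 2 := by
    rw [variance_sum_pi hmem]
    refine (Finset.sum_le_card_nsmul _ _ (M ^ 2) fun i _ => ?_).trans_eq (by
      rw [Finset.card_univ, Fintype.card_fin, nsmul_eq_mul])
    simpa only [sub_neg_eq_add, add_self_div_two] using
      variance_le_sq_of_bounded (.of_forall fun z => abs_le.1 (hM z)) hf.aemeasurable
  have X_apply (z) : X z = n * ∫ w, f w ∂(empiricalMeasure z : Measure Z) := by
    simp only [X, natCast_mul_integral_empiricalMeasure z hf, Finset.sum_apply]
  have preimage_eq : empiricalMeasure ⁻¹'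
      {ρ | ε ≤ |∫ z, f z ∂(ρ : Measure Z) - ∫ z, f z ∂averageMeasure m|} =
      {z | n * ε ≤ |X z - ∫ z, X z ∂Measure.pi m|} := by
    ext z
    rw [integral_X, mem_preimage, mem_ofPred_eq, mem_ofPred_eq, X_apply, ← mul_sub, abs_mul,
      abs_of_pos hn₀, mul_le_mul_iff_right₀ hn₀]
  rw [empiricalLaw, Measure.map_apply measurable_empiricalMeasure (measurableSet_le
    measurable_const ((measurable_integral_probabilityMeasure hf).sub_const _).abs), preimage_eq]
  refine (meas_ge_le_variance_div_sq hX (mul_pos hn₀ hε)).trans (ENNReal.ofReal_le_ofReal ?_)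
  calc Var[X; Measure.pi m] / (n * ε) ^ 2 ≤ n * M ^ 2 / (n * ε) ^ 2 := by gcongr
    _ = M ^ 2 / ε ^ 2 / n := by field_simp

variable [TopologicalSpace Z] [OpensMeasurableSpace Z] {m : (n : ℕ) → Fin n → Measure Z}
  [∀ n i, IsProbabilityMeasure (m n i)] {q : ProbabilityMeasure Z}

theorem tendsto_empiricalLaw_compl_nhds
    (hm : TendstoNarrowly (fun n => averageMeasure (m n)) (q : Measure Z))
    {U : Set (ProbabilityMeasure Z)} (hU : U ∈ 𝓝 q) :
    Tendsto (fun n => empiricalLaw (m n) Uᶜ) atTop (𝓝 0) := by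
  refine tendsto_measure_compl_of_tendsto_integral (fun f ε hε => ?_) hU
  have hbound : Tendsto (fun n : ℕ => ENNReal.ofReal (‖f‖ ^ 2 / (ε / 2) ^ 2 / n)) atTop (𝓝 0) := by
    simpa only [ENNReal.ofReal_zero] using
      ENNReal.tendsto_ofReal (tendsto_const_div_atTop_nhds_zero_nat (‖f‖ ^ 2 / (ε / 2) ^ 2))
  refine tendsto_of_tendsto_of_tendsto_of_le_of_le' tendsto_const_nhds hbound
    (.of_forall fun n => zero_le) ?_
  filter_upwards [eventually_ne_atTop 0, Metric.tendsto_nhds.1 (hm f) (ε / 2) (half_pos hε)]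
    with n hn hclose
  refine (measure_mono fun ρ hρ => ?_).trans (empiricalLaw_abs_sub_ge_le_div hn
    f.continuous.measurable (fun z => f.norm_coe_le_norm z) (half_pos hε))
  have htri := abs_sub_le (∫ z, f z ∂(ρ : Measure Z)) (∫ z, f z ∂averageMeasure (m n))
    (∫ z, f z ∂(q : Measure Z))
  rw [Real.dist_eq] at hclose
  rw [mem_ofPred_eq] at hρ ⊢
  linarith

end LawOfLargeNumbers

section ExponentialGrowth

theorem tendsto_log_ofReal_exp_div_natCast {b : ℕ → ℝ} {β : ℝ}
    (hb : Tendsto (fun n : ℕ => (n : ℝ)⁻¹ * b n) atTop (𝓝 β)) :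
    Tendsto (fun n : ℕ => ENNReal.log (ENNReal.ofReal (Real.exp (b n))) / (n : EReal)) atTop
      (𝓝 (β : EReal)) := by
  refine ((continuous_coe_real_ereal.tendsto β).comp hb).congr fun n => ?_
  rw [ENNReal.log_ofReal_of_pos (Real.exp_pos _), Real.log_exp, Function.comp_apply,
    inv_mul_eq_div, EReal.coe_div, EReal.coe_natCast]

theorem expGrowthInf_ofReal_exp {b : ℕ → ℝ} {β : ℝ}
    (hb : Tendsto (fun n : ℕ => (n : ℝ)⁻¹ * b n) atTop (𝓝 β)) :
    (expGrowthInf fun n => ENNReal.ofReal (Real.exp (b n))) = β :=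
  (tendsto_log_ofReal_exp_div_natCast hb).liminf_eq

theorem expGrowthSup_ofReal_exp {b : ℕ → ℝ} {β : ℝ}
    (hb : Tendsto (fun n : ℕ => (n : ℝ)⁻¹ * b n) atTop (𝓝 β)) :
    (expGrowthSup fun n => ENNReal.ofReal (Real.exp (b n))) = β :=
  (tendsto_log_ofReal_exp_div_natCast hb).limsup_eq

theorem tendsto_inv_natCast_mul_mul (c : ℝ) :
    Tendsto (fun n : ℕ => (n : ℝ)⁻¹ * (n * c)) atTop (𝓝 c) :=
  tendsto_const_nhds.congr' <| by
    filter_upwards [eventually_ne_atTop 0] with n hn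
    exact (inv_mul_cancel_left₀ (Nat.cast_ne_zero.2 hn) c).symm

end ExponentialGrowth

section Bounds

theorem integrable_exp_of_abs_le {Z : Type*} [MeasurableSpace Z] {F : Z → ℝ} (hF : Measurable F)
    {M : ℝ} (hM : ∀ z, |F z| ≤ M) (μ : Measure Z) [IsFiniteMeasure μ] :
    Integrable (fun z => Real.exp (F z)) μ :=
  .of_bound hF.exp.aestronglyMeasurable (Real.exp M) <| .of_forall fun z => by
    rw [Real.norm_of_nonneg (Real.exp_pos _).le, Real.exp_le_exp]
    exact (le_abs_self _).trans (hM z)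

theorem continuous_integral_probabilityMeasure {Z : Type*} [TopologicalSpace Z] [MeasurableSpace Z]
    [OpensMeasurableSpace Z] (F : BoundedContinuousFunction Z ℝ) :
    Continuous fun ρ : ProbabilityMeasure Z => ∫ z, F z ∂(ρ : Measure Z) :=
  continuous_iff_continuousAt.2 fun _ =>
    ProbabilityMeasure.tendsto_iff_forall_integral_tendsto.1 tendsto_id F

variable {Z : Type*} [MeasurableSpace Z] [Nonempty Z] {m : (n : ℕ) → Fin n → Measure Z}
  [∀ n i, IsProbabilityMeasure (m n i)]

theorem expGrowthSup_empiricalLaw_ge_le {F : Z → ℝ} (hF : Measurable F)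
    (hexp : ∀ n i, Integrable (fun z => Real.exp (F z)) (m n i)) {Λ : ℝ}
    (hΛ : Tendsto (fun n : ℕ => (n : ℝ)⁻¹ * ∑ i, cgf F (m n i) 1) atTop (𝓝 Λ)) (c : ℝ) :
    (expGrowthSup fun n => empiricalLaw (m n) {ρ | c ≤ ∫ z, F z ∂(ρ : Measure Z)}) ≤
      ((Λ - c : ℝ) : EReal) :=
  (expGrowthSup_monotone fun n => empiricalLaw_ge_le_exp_cgf hF (hexp n) c).trans_eq <|
    expGrowthSup_ofReal_exp <| by
      simpa only [mul_sub] using hΛ.sub (tendsto_inv_natCast_mul_mul c)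

variable [TopologicalSpace Z] [OpensMeasurableSpace Z] {q : ProbabilityMeasure Z}

theorem le_expGrowthInf_empiricalLaw_of_tendsto_tilted {F : Z → ℝ} (hF : Measurable F)
    (hexp : ∀ n i, Integrable (fun z => Real.exp (F z)) (m n i))
    (hm : TendstoNarrowly (fun n => averageMeasure fun i => (m n i).tilted F) (q : Measure Z))
    {Λ : ℝ}
    (hΛ : Tendsto (fun n : ℕ => (n : ℝ)⁻¹ * ∑ i, cgf F (m n i) 1) atTop (𝓝 Λ))
    {V : Set (ProbabilityMeasure Z)} (hV : V ∈ 𝓝 q) {c : ℝ}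
    (hc : ∀ ρ ∈ V, ∫ z, F z ∂(ρ : Measure Z) ≤ c) :
    ((Λ - c : ℝ) : EReal) ≤ expGrowthInf fun n => empiricalLaw (m n) V := by
  have : ∀ n i, IsProbabilityMeasure ((m n i).tilted F) := fun n i =>
    isProbabilityMeasure_tilted (hexp n i)
  rw [← expGrowthInf_ofReal_exp (b := fun n => ∑ i, cgf F (m n i) 1 - n * c) <| by
    simpa only [mul_sub] using hΛ.sub (tendsto_inv_natCast_mul_mul c)]
  refine expGrowthInf_of_eventually_ge (b := 2⁻¹) (by norm_num) ?_
  filter_upwards [(tendsto_empiricalLaw_compl_nhds hm hV).eventually_le_const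
    (ENNReal.inv_pos.2 ENNReal.ofNat_ne_top : (0 : ℝ≥0∞) < 2⁻¹)] with n hn
  have half_le : 2⁻¹ ≤ empiricalLaw (fun i => (m n i).tilted F) V := by
    refine (ENNReal.add_le_add_iff_right (ENNReal.inv_ne_top.2 two_ne_zero)).1 ?_
    rw [ENNReal.inv_two_add_inv_two, ← measure_univ (μ := empiricalLaw fun i => (m n i).tilted F)]
    exact (measure_univ_le_add_compl V).trans (add_le_add_right hn _)
  set s := ∑ i, cgf F (m n i) 1 - n * c
  calc 2⁻¹ * ENNReal.ofReal (Real.exp s)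
      ≤ ENNReal.ofReal (Real.exp (-s)) * empiricalLaw (m n) V * ENNReal.ofReal (Real.exp s) := by
        gcongr
        rw [neg_sub]
        exact half_le.trans (empiricalLaw_tilted_apply_le hF (hexp n) hc)
    _ = empiricalLaw (m n) V := by
        rw [mul_right_comm, ← ENNReal.ofReal_mul (Real.exp_pos _).le, ← Real.exp_add,
          neg_add_cancel, Real.exp_zero, ENNReal.ofReal_one, one_mul]

theorem lowerBoundAt_empiricalLaw_of_tendsto_tilted (F : BoundedContinuousFunction Z ℝ)
    (hm : TendstoNarrowly (fun n => averageMeasure fun i => (m n i).tilted F) (q : Measure Z))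
    {Λ : ℝ}
    (hΛ : Tendsto (fun n : ℕ => (n : ℝ)⁻¹ * ∑ i, cgf F (m n i) 1) atTop (𝓝 Λ)) :
    LowerBoundAt (fun n => empiricalLaw (m n)) q
      ((∫ z, F z ∂(q : Measure Z) - Λ : ℝ) : EReal) := by
  set c : ℝ := ∫ z, F z ∂(q : Measure Z)
  suffices h : ∀ k : ℕ, LowerBoundAt (fun n => empiricalLaw (m n)) q
      ((c + 1 / ((k : ℝ) + 1) - Λ : ℝ) : EReal) by
    refine .of_tendsto (l := atTop) tendsto_const_nhds
      ((continuous_coe_real_ereal.tendsto (c - Λ)).comp ?_) h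
    simpa only [add_zero] using
      (tendsto_one_div_add_atTop_nhds_zero_nat.const_add c).sub_const Λ
  intro k U hU
  have hV : {ρ : ProbabilityMeasure Z | ∫ z, F z ∂(ρ : Measure Z) < c + 1 / ((k : ℝ) + 1)} ∈ 𝓝 q :=
    (isOpen_lt (continuous_integral_probabilityMeasure F) continuous_const).mem_nhds
      (lt_add_of_pos_right c Nat.one_div_pos_of_nat)
  rw [← EReal.coe_neg, neg_sub]
  exact (le_expGrowthInf_empiricalLaw_of_tendsto_tilted F.continuous.measurable
    (fun n i => integrable_exp_of_abs_le F.continuous.measurable F.norm_coe_le_norm _) hm hΛ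
    (inter_mem hU hV) fun ρ hρ => le_of_lt hρ.2).trans
    (expGrowthInf_monotone fun n => measure_mono inter_subset_left)

end Bounds

section ExponentialTightness

theorem cgf_indicator_const_one_le {Z : Type*} [MeasurableSpace Z] (μ : Measure Z)
    [IsProbabilityMeasure μ] {A : Set Z} (hA : MeasurableSet A) (l : ℝ) :
    cgf (A.indicator fun _ => l) μ 1 ≤ Real.exp l * μ.real A := by
  have exp_eq : (fun z => Real.exp (1 * A.indicator (fun _ => l) z)) =
      fun z => 1 + A.indicator (fun _ => Real.exp l - 1) z := by
    ext z
    by_cases hz : z ∈ A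
    · simp only [indicator_of_mem hz, one_mul, add_sub_cancel]
    · simp only [indicator_of_notMem hz, mul_zero, Real.exp_zero, add_zero]
  have hint : Integrable (A.indicator fun _ => Real.exp l - 1) μ :=
    (integrable_const _).indicator hA
  have mgf_eq : mgf (A.indicator fun _ => l) μ 1 = 1 + μ.real A * (Real.exp l - 1) := by
    rw [mgf, exp_eq, integral_add (integrable_const _) hint, integral_indicator_const _ hA,
      integral_const, probReal_univ, one_smul, smul_eq_mul]
  calc cgf (A.indicator fun _ => l) μ 1
      ≤ mgf (A.indicator fun _ => l) μ 1 - 1 := Real.log_le_sub_one_of_pos <|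
        mgf_pos (exp_eq ▸ (integrable_const _).add hint)
    _ = μ.real A * (Real.exp l - 1) := by rw [mgf_eq, add_sub_cancel_left]
    _ ≤ Real.exp l * μ.real A := by
        rw [mul_sub, mul_one, mul_comm]
        exact sub_le_self _ measureReal_nonneg

theorem natCast_mul_averageMeasure_real {Z : Type*} [MeasurableSpace Z] {n : ℕ}
    (m : Fin n → Measure Z) [∀ i, IsFiniteMeasure (m i)] (s : Set Z) :
    (n : ℝ) * (averageMeasure m).real s = ∑ i, (m i).real s := by
  rcases eq_or_ne n 0 with rfl | hn
  · simp only [Nat.cast_zero, zero_mul, Finset.univ_eq_empty, Finset.sum_empty]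
  · simp only [measureReal_def, averageMeasure_apply, ENNReal.toReal_mul, ENNReal.toReal_inv,
      ENNReal.toReal_natCast]
    rw [ENNReal.toReal_sum fun i _ => measure_ne_top _ _,
      mul_inv_cancel_left₀ (Nat.cast_ne_zero.2 hn)]

variable {Z : Type*} [MeasurableSpace Z] [Nonempty Z]

theorem empiricalLaw_measureReal_ge_le {n : ℕ} (m : Fin n → Measure Z)
    [∀ i, IsProbabilityMeasure (m i)] {A : Set Z} (hA : MeasurableSet A) {l : ℝ} (hl : 0 ≤ l)
    (c : ℝ) :
    empiricalLaw m {ρ | c ≤ (ρ : Measure Z).real A} ≤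
      ENNReal.ofReal (Real.exp (n * (Real.exp l * (averageMeasure m).real A - l * c))) := by
  let F : Z → ℝ := A.indicator fun _ => l
  have hF : Measurable F := measurable_const.indicator hA
  have integral_F (ρ : ProbabilityMeasure Z) :
      ∫ z, F z ∂(ρ : Measure Z) = l * (ρ : Measure Z).real A := by
    rw [integral_indicator_const _ hA, smul_eq_mul, mul_comm]
  have abs_F_le (z : Z) : |F z| ≤ l := by
    rw [abs_of_nonneg (indicator_nonneg (fun _ _ => hl) z)]
    exact indicator_le_self' (fun _ _ => hl) z
  calc empiricalLaw m {ρ | c ≤ (ρ : Measure Z).real A}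
      ≤ empiricalLaw m {ρ | l * c ≤ ∫ z, F z ∂(ρ : Measure Z)} := measure_mono fun ρ hρ => by
        rw [mem_ofPred_eq, integral_F]
        exact mul_le_mul_of_nonneg_left hρ hl
    _ ≤ ENNReal.ofReal (Real.exp (∑ i, cgf F (m i) 1 - n * (l * c))) :=
        empiricalLaw_ge_le_exp_cgf hF (fun i => integrable_exp_of_abs_le hF abs_F_le (m i)) _
    _ ≤ _ := by
        rw [mul_sub, mul_left_comm _ (Real.exp l), natCast_mul_averageMeasure_real, Finset.mul_sum]
        gcongr with i
        exact cgf_indicator_const_one_le (m i) hA l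

theorem empiricalLaw_measureReal_ge_le_exp_mul_pow {n : ℕ} (hn : n ≠ 0) (m : Fin n → Measure Z)
    [∀ i, IsProbabilityMeasure (m i)] {A : Set Z} (hA : MeasurableSet A) {a : ℝ} (ha : 0 ≤ a)
    (k : ℕ) (hAk : averageMeasure m A ≤ ENNReal.ofReal (Real.exp (-((k + 1) * (a + k + 1))))) :
    empiricalLaw m {ρ | 1 / ((k : ℝ) + 1) ≤ (ρ : Measure Z).real A} ≤
      ENNReal.ofReal (Real.exp (-a * n)) * ENNReal.ofReal (Real.exp (-1)) ^ k := by
  set l : ℝ := (k + 1) * (a + k + 1) with hl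
  have exp_mul_le : Real.exp l * (averageMeasure m).real A ≤ 1 := by
    rw [← Real.exp_zero, ← add_neg_cancel l, Real.exp_add]
    gcongr
    exact ENNReal.toReal_le_of_le_ofReal (Real.exp_pos _).le hAk
  have l_mul : l * (1 / ((k : ℝ) + 1)) = a + k + 1 := by
    rw [hl]
    field_simp
  have hn₁ : (1 : ℝ) ≤ n := Nat.one_le_cast.2 (Nat.one_le_iff_ne_zero.2 hn)
  refine (empiricalLaw_measureReal_ge_le m hA (l := l) (by positivity) _).trans ?_
  rw [l_mul, ← ENNReal.ofReal_pow (Real.exp_pos _).le, ← Real.exp_nat_mul,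
    ← ENNReal.ofReal_mul (Real.exp_pos _).le, ← Real.exp_add]
  refine ENNReal.ofReal_le_ofReal (Real.exp_le_exp.2 ?_)
  calc n * (Real.exp l * (averageMeasure m).real A - (a + k + 1))
      ≤ n * (1 - (a + k + 1)) := by gcongr
    _ ≤ -a * n + k * -1 := by nlinarith [Nat.cast_nonneg (α := ℝ) k]

variable [TopologicalSpace Z] [T2Space Z] [NormalSpace Z] [BorelSpace Z]

theorem exponentiallyTight_empiricalLaw {m : (n : ℕ) → Fin n → Measure Z}
    [∀ n i, IsProbabilityMeasure (m n i)]
    (htight : IsTightMeasureSet (range fun n => averageMeasure (m n))) :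
    ExponentiallyTight fun n => empiricalLaw (m n) := by
  intro a
  choose K hK hKl using fun k : ℕ => isTightMeasureSet_iff_exists_isCompact_measure_compl_le.1
    htight (ENNReal.ofReal (Real.exp (-((k + 1) * (|a| + k + 1)))))
    (ENNReal.ofReal_pos.2 (Real.exp_pos _))
  let u (k : ℕ) : ℝ≥0 := 1 / (k + 1)
  let r : ℝ≥0∞ := ENNReal.ofReal (Real.exp (-1))
  let 𝒦 : Set (ProbabilityMeasure Z) := {ρ | ∀ k, ρ (K k)ᶜ ≤ u k}
  have compl_subset : 𝒦ᶜ ⊆ ⋃ k : ℕ, {ρ | 1 / ((k : ℝ) + 1) ≤ (ρ : Measure Z).real (K k)ᶜ} := by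
    intro ρ hρ
    simp only [𝒦, mem_compl_iff, mem_ofPred_eq, not_forall, not_le] at hρ
    obtain ⟨k, hk⟩ := hρ
    refine mem_iUnion.2 ⟨k, ?_⟩
    have hle : (u k : ℝ) ≤ ρ (K k)ᶜ := NNReal.coe_le_coe.2 hk.le
    rwa [NNReal.coe_div, NNReal.coe_add, NNReal.coe_natCast, NNReal.coe_one] at hle
  have law_le {n : ℕ} (hn : n ≠ 0) :
      empiricalLaw (m n) 𝒦ᶜ ≤ (1 - r)⁻¹ * ENNReal.ofReal (Real.exp (-|a| * n)) := by
    rw [mul_comm, ← ENNReal.tsum_geometric, ← ENNReal.tsum_mul_left]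
    refine (measure_mono compl_subset).trans ((measure_iUnion_le _).trans
      (ENNReal.tsum_le_tsum fun k => ?_))
    exact empiricalLaw_measureReal_ge_le_exp_mul_pow hn (m n)
      (hK k).isClosed.isOpen_compl.measurableSet (abs_nonneg a) k (hKl k _ (mem_range_self n))
  have hr : (1 - r)⁻¹ ≠ ∞ := ENNReal.inv_ne_top.2 <| (tsub_pos_of_lt <|
    ENNReal.ofReal_lt_one.2 <| Real.exp_lt_one_iff.2 <| neg_lt_zero.2 one_pos).ne'
  refine ⟨𝒦, isCompact_setOfPred_probabilityMeasure_mass_eq_compl_isCompact_le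
    tendsto_one_div_add_atTop_nhds_zero_nat hK (.inl ‹NormalSpace Z›), ?_⟩
  calc (expGrowthSup fun n => empiricalLaw (m n) 𝒦ᶜ)
      ≤ expGrowthSup fun n : ℕ => ENNReal.ofReal (Real.exp (n * -|a|)) :=
        expGrowthSup_le_of_eventually_le hr <| by
          filter_upwards [eventually_ne_atTop 0] with n hn
          exact mul_comm (-|a|) n ▸ law_le hn
    _ = ((-|a| : ℝ) : EReal) := expGrowthSup_ofReal_exp (tendsto_inv_natCast_mul_mul _)
    _ ≤ -(a : EReal) := by
        exact_mod_cast neg_le_neg (le_abs_self a)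

end ExponentialTightness

section FiberLaw

variable {X Y : Type*} [MeasurableSpace X] [MeasurableSpace Y] {κ : Kernel X Y}

/-- The law `δ_a ⊗ κ a` of the pair `(a, b)` with `b` distributed according to `κ a`. -/
def fiberLaw (κ : Kernel X Y) (a : X) : Measure (X × Y) :=
  (κ a).map (Prod.mk a)

instance isProbabilityMeasure_fiberLaw [IsMarkovKernel κ] (a : X) :
    IsProbabilityMeasure (fiberLaw κ a) :=
  Measure.isProbabilityMeasure_map measurable_prodMk_left.aemeasurable

theorem integral_fiberLaw {f : X × Y → ℝ} (hf : Measurable f) (a : X) :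
    ∫ z, f z ∂fiberLaw κ a = ∫ b, f (a, b) ∂κ a :=
  integral_map measurable_prodMk_left.aemeasurable hf.aestronglyMeasurable

/-- The logarithmic moment generating function `Λ_F(a) = log ∫ e^{F(a, b)} κ(a, db)` of `F` along
the fibers of `κ`. -/
def logMGF (κ : Kernel X Y) (F : X × Y → ℝ) (a : X) : ℝ :=
  cgf (fun b => F (a, b)) (κ a) 1

theorem logMGF_eq_log_integral (F : X × Y → ℝ) (a : X) :
    logMGF κ F a = Real.log (∫ b, Real.exp (F (a, b)) ∂κ a) := by
  simp only [logMGF, cgf, mgf, one_mul]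

theorem cgf_fiberLaw {F : X × Y → ℝ} (hF : Measurable F) (a : X) :
    cgf F (fiberLaw κ a) 1 = logMGF κ F a := by
  rw [logMGF_eq_log_integral, cgf, mgf, integral_fiberLaw (hF.const_mul 1).exp]
  simp only [one_mul]

variable [IsMarkovKernel κ]

theorem logMGF_comp_fst (g : X → ℝ) (a : X) : logMGF κ (fun z => g z.1) a = g a := by
  simp only [logMGF_eq_log_integral, integral_const, probReal_univ, one_smul, Real.log_exp]

variable {F : X × Y → ℝ} {M : ℝ}

theorem measurable_logMGF (hF : Measurable F) : Measurable (logMGF κ F) := by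
  simp only [funext (logMGF_eq_log_integral F)]
  exact (hF.exp.stronglyMeasurable.integral_kernel_prod_right' (κ := κ)).measurable.log

theorem integrable_exp_section (hF : Measurable F) (hM : ∀ z, |F z| ≤ M) (a : X) :
    Integrable (fun b => Real.exp (F (a, b))) (κ a) :=
  integrable_exp_of_abs_le (hF.comp measurable_prodMk_left) (fun b => hM (a, b)) _

theorem exp_logMGF (hF : Measurable F) (hM : ∀ z, |F z| ≤ M) (a : X) :
    Real.exp (logMGF κ F a) = ∫ b, Real.exp (F (a, b)) ∂κ a := by
  rw [logMGF_eq_log_integral, Real.exp_log (integral_exp_pos (integrable_exp_section hF hM a))]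

theorem abs_logMGF_le (hF : Measurable F) (hM : ∀ z, |F z| ≤ M) (a : X) :
    |logMGF κ F a| ≤ M := by
  have hint := integrable_exp_section (κ := κ) hF hM a
  have hle (b) := abs_le.1 (hM (a, b))
  rw [abs_le, ← Real.exp_le_exp, ← Real.exp_le_exp (x := logMGF κ F a), exp_logMGF hF hM]
  constructor
  · simpa only [integral_const, probReal_univ, one_smul] using integral_mono
      (integrable_const (Real.exp (-M))) hint fun b => Real.exp_le_exp.2 (hle b).1
  · simpa only [integral_const, probReal_univ, one_smul] using integral_mono
      hint (integrable_const (Real.exp M)) fun b => Real.exp_le_exp.2 (hle b).2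

theorem integral_tilted_fiberLaw (hF : Measurable F) (hM : ∀ z, |F z| ≤ M)
    {f : X × Y → ℝ} (hf : Measurable f) (a : X) :
    ∫ z, f z ∂(fiberLaw κ a).tilted F =
      ∫ b, Real.exp (F (a, b) - logMGF κ F a) * f (a, b) ∂κ a := by
  rw [tilted_eq_withDensity_exp_sub_cgf (integrable_exp_of_abs_le hF hM _), cgf_fiberLaw hF,
    integral_withDensity_eq_integral_toReal_smul (hF.sub_const _).exp.ennreal_ofReal
      (.of_forall fun _ => ENNReal.ofReal_lt_top)]
  simp only [ENNReal.toReal_ofReal (Real.exp_pos _).le, smul_eq_mul]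
  exact integral_fiberLaw ((hF.sub_const _).exp.mul hf) a

/-- The measure with density `e^{F(a, b) - Λ_F(a)}` with respect to `ρ ⊗ₘ κ`, that is, `κ a` is
exponentially tilted by `F` in each fiber and the first marginal is kept. -/
def fiberTilted (ρ : Measure X) (κ : Kernel X Y) (F : X × Y → ℝ) : Measure (X × Y) :=
  (ρ ⊗ₘ κ).withDensity fun z => ENNReal.ofReal (Real.exp (F z - logMGF κ F z.1))

theorem measurable_exp_sub_logMGF (hF : Measurable F) :
    Measurable fun z : X × Y => Real.exp (F z - logMGF κ F z.1) :=
  (hF.sub ((measurable_logMGF hF).comp measurable_fst)).exp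

theorem integral_fiberTilted {ρ : Measure X} (hF : Measurable F) (f : X × Y → ℝ) :
    ∫ z, f z ∂fiberTilted ρ κ F = ∫ z, Real.exp (F z - logMGF κ F z.1) * f z ∂(ρ ⊗ₘ κ) := by
  simp_rw [fiberTilted, integral_withDensity_eq_integral_toReal_smul
    (measurable_exp_sub_logMGF hF).ennreal_ofReal (.of_forall fun _ => ENNReal.ofReal_lt_top),
    ENNReal.toReal_ofReal (Real.exp_pos _).le, smul_eq_mul]

theorem lintegral_exp_sub_logMGF (hF : Measurable F) (hM : ∀ z, |F z| ≤ M) (a : X) :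
    ∫⁻ b, ENNReal.ofReal (Real.exp (F (a, b) - logMGF κ F a)) ∂κ a = 1 := by
  simp_rw [Real.exp_sub, exp_logMGF hF hM]
  rw [← ofReal_integral_eq_lintegral_ofReal ((integrable_exp_section hF hM a).div_const _)
    (.of_forall fun _ => (div_pos (Real.exp_pos _) (integral_exp_pos
      (integrable_exp_section hF hM a))).le), integral_div,
    div_self (integral_exp_pos (integrable_exp_section hF hM a)).ne', ENNReal.ofReal_one]

theorem fst_fiberTilted {ρ : Measure X} [SFinite ρ] (hF : Measurable F) (hM : ∀ z, |F z| ≤ M) :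
    (fiberTilted ρ κ F).fst = ρ := by
  ext s hs
  rw [Measure.fst_apply hs, fiberTilted, withDensity_apply _ (measurable_fst hs), ← prod_univ,
    Measure.setLIntegral_compProd (measurable_exp_sub_logMGF hF).ennreal_ofReal hs .univ]
  simp only [Measure.restrict_univ, lintegral_exp_sub_logMGF hF hM, lintegral_const, one_mul,
    Measure.restrict_apply, univ_inter, MeasurableSet.univ]

theorem isProbabilityMeasure_fiberTilted {ρ : Measure X} [IsProbabilityMeasure ρ]
    (hF : Measurable F) (hM : ∀ z, |F z| ≤ M) : IsProbabilityMeasure (fiberTilted ρ κ F) :=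
  ⟨by rw [← Measure.fst_univ, fst_fiberTilted hF hM, measure_univ]⟩

end FiberLaw

section Feller

variable {X Y : Type*} [TopologicalSpace X] [MeasurableSpace X] [OpensMeasurableSpace X]

theorem TendstoNarrowly.tendsto_average {x : (n : ℕ) → Fin n → X} {ρ : Measure X}
    (hx : TendstoNarrowly (fun n => averageMeasure fun i => Measure.dirac (x n i)) ρ)
    {g : X → ℝ} (hg : Continuous g) {M : ℝ} (hM : ∀ a, |g a| ≤ M) :
    Tendsto (fun n : ℕ => (n : ℝ)⁻¹ * ∑ i, g (x n i)) atTop (𝓝 (∫ a, g a ∂ρ)) :=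
  (hx (.ofNormedAddCommGroup g hg M hM)).congr fun n =>
    integral_averageMeasure_dirac (x n) hg.measurable

variable [TopologicalSpace Y] [MeasurableSpace Y] [OpensMeasurableSpace Y]

/-- A Markov kernel is Feller if it is continuous as a map into the space of probability measures
with the narrow topology. -/
def IsFeller (κ : Kernel X Y) [IsMarkovKernel κ] : Prop :=
  Continuous (Y := ProbabilityMeasure Y) fun a => ⟨κ a, inferInstance⟩

variable [SecondCountableTopology X] [SecondCountableTopology Y]
  [TopologicalSpace.PseudoMetrizableSpace X] [TopologicalSpace.PseudoMetrizableSpace Y]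
  {κ : Kernel X Y} [IsMarkovKernel κ]

theorem IsFeller.continuous_integral_section (hκ : IsFeller κ) {f : X × Y → ℝ} (hf : Continuous f)
    {M : ℝ} (hM : ∀ z, |f z| ≤ M) : Continuous fun a => ∫ b, f (a, b) ∂κ a := by
  have hprod := (continuous_integral_probabilityMeasure
    (BoundedContinuousFunction.ofNormedAddCommGroup f hf M hM)).comp
      (ProbabilityMeasure.continuous_prod.comp (continuous_diracProba.prodMk hκ))
  refine hprod.congr fun a => ?_
  have dirac_prod : (Measure.dirac a).prod (κ a) = fiberLaw κ a := Measure.dirac_prod a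
  rw [← integral_fiberLaw hf.measurable, ← dirac_prod]
  rfl

theorem IsFeller.continuous_logMGF (hκ : IsFeller κ) {F : X × Y → ℝ} (hF : Continuous F) {M : ℝ}
    (hM : ∀ z, |F z| ≤ M) : Continuous (logMGF κ F) := by
  simp only [funext (logMGF_eq_log_integral F)]
  refine (hκ.continuous_integral_section hF.rexp (M := Real.exp M) fun z => ?_).log fun a =>
    (integral_exp_pos (integrable_exp_section hF.measurable hM a)).ne'
  rw [abs_of_pos (Real.exp_pos _), Real.exp_le_exp]
  exact (le_abs_self _).trans (hM z)

variable {ρ : Measure X} {x : (n : ℕ) → Fin n → X}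

theorem tendsto_average_integral_section [IsFiniteMeasure ρ] (hκ : IsFeller κ)
    (hx : TendstoNarrowly (fun n => averageMeasure fun i => Measure.dirac (x n i)) ρ)
    {f : X × Y → ℝ} (hf : Continuous f) {M : ℝ} (hM : ∀ z, |f z| ≤ M) :
    Tendsto (fun n : ℕ => (n : ℝ)⁻¹ * ∑ i, ∫ b, f (x n i, b) ∂κ (x n i)) atTop
      (𝓝 (∫ z, f z ∂(ρ ⊗ₘ κ))) := by
  rw [Measure.integral_compProd (.of_bound hf.measurable.aestronglyMeasurable M (.of_forall hM))]
  refine hx.tendsto_average (hκ.continuous_integral_section hf hM) (M := M) fun a => ?_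
  have hMa (b : Y) : ‖f (a, b)‖ ≤ M := hM (a, b)
  simpa only [probReal_univ, mul_one, Real.norm_eq_abs] using
    norm_integral_le_of_norm_le_const (μ := κ a) (.of_forall hMa)

theorem tendstoNarrowly_averageMeasure_fiberLaw [IsFiniteMeasure ρ] (hκ : IsFeller κ)
    (hx : TendstoNarrowly (fun n => averageMeasure fun i => Measure.dirac (x n i)) ρ) :
    TendstoNarrowly (fun n => averageMeasure fun i => fiberLaw κ (x n i)) (ρ ⊗ₘ κ) := fun f =>
  (tendsto_average_integral_section hκ hx f.continuous f.norm_coe_le_norm).congr fun n => by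
    rw [integral_averageMeasure fun i => f.integrable _]
    simp only [integral_fiberLaw f.continuous.measurable]

theorem tendstoNarrowly_averageMeasure_tilted_fiberLaw [IsFiniteMeasure ρ] (hκ : IsFeller κ)
    (hx : TendstoNarrowly (fun n => averageMeasure fun i => Measure.dirac (x n i)) ρ)
    (F : BoundedContinuousFunction (X × Y) ℝ) :
    TendstoNarrowly (fun n => averageMeasure fun i => (fiberLaw κ (x n i)).tilted F)
      (fiberTilted ρ κ F) := by
  intro f
  have hF := F.continuous.measurable
  have hM := F.norm_coe_le_norm
  have hΛ := hκ.continuous_logMGF F.continuous hM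
  have hbound (z : X × Y) :
      |Real.exp (F z - logMGF κ F z.1) * f z| ≤ Real.exp (‖F‖ + ‖F‖) * ‖f‖ := by
    rw [abs_mul, abs_of_pos (Real.exp_pos _)]
    gcongr
    · linarith [(abs_le.1 (hM z)).2, (abs_le.1 (abs_logMGF_le (κ := κ) hF hM z.1)).1]
    · exact f.norm_coe_le_norm z
  rw [integral_fiberTilted hF]
  refine (tendsto_average_integral_section hκ hx (by fun_prop) hbound).congr fun n => ?_
  have : ∀ i, IsProbabilityMeasure ((fiberLaw κ (x n i)).tilted F) := fun i =>
    isProbabilityMeasure_tilted (integrable_exp_of_abs_le hF hM _)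
  rw [integral_averageMeasure fun i => f.integrable _]
  simp only [integral_tilted_fiberLaw hF hM f.continuous.measurable]

theorem tendsto_average_cgf_fiberLaw (hκ : IsFeller κ)
    (hx : TendstoNarrowly (fun n => averageMeasure fun i => Measure.dirac (x n i)) ρ)
    (F : BoundedContinuousFunction (X × Y) ℝ) :
    Tendsto (fun n : ℕ => (n : ℝ)⁻¹ * ∑ i, cgf F (fiberLaw κ (x n i)) 1) atTop
      (𝓝 (∫ a, logMGF κ F a ∂ρ)) := by
  have hF := F.continuous.measurable
  simp only [cgf_fiberLaw hF]
  exact hx.tendsto_average (hκ.continuous_logMGF F.continuous F.norm_coe_le_norm)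
    (abs_logMGF_le hF F.norm_coe_le_norm)

variable [Nonempty X] [Nonempty Y] {q : ProbabilityMeasure (X × Y)}

theorem lowerBoundAt_fiberTilted_of_continuous [IsFiniteMeasure ρ] (hκ : IsFeller κ)
    (hx : TendstoNarrowly (fun n => averageMeasure fun i => Measure.dirac (x n i)) ρ)
    (F : BoundedContinuousFunction (X × Y) ℝ) (hq : (q : Measure (X × Y)) = fiberTilted ρ κ F) :
    LowerBoundAt (fun n => empiricalLaw fun i => fiberLaw κ (x n i)) q
      ((∫ z, F z ∂(q : Measure (X × Y)) - ∫ a, logMGF κ F a ∂ρ : ℝ) : EReal) :=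
  lowerBoundAt_empiricalLaw_of_tendsto_tilted F
    (hq ▸ tendstoNarrowly_averageMeasure_tilted_fiberLaw hκ hx F)
    (tendsto_average_cgf_fiberLaw hκ hx F)

theorem exists_mem_nhds_expGrowthSup_le (hκ : IsFeller κ)
    (hx : TendstoNarrowly (fun n => averageMeasure fun i => Measure.dirac (x n i)) ρ)
    {F : BoundedContinuousFunction (X × Y) ℝ} {a : ℝ}
    (ha : a < ∫ z, F z ∂(q : Measure (X × Y)) - ∫ b, logMGF κ F b ∂ρ) :
    ∃ U ∈ 𝓝 q,
      expGrowthSup (fun n => empiricalLaw (fun i => fiberLaw κ (x n i)) U) ≤ -(a : EReal) := by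
  let Λ : ℝ := ∫ b, logMGF κ F b ∂ρ
  let U : Set (ProbabilityMeasure (X × Y)) := {ρ | a + Λ ≤ ∫ z, F z ∂(ρ : Measure (X × Y))}
  have hU : U ∈ 𝓝 q := (continuous_integral_probabilityMeasure F).continuousAt.eventually
    (eventually_ge_nhds (lt_sub_iff_add_lt.1 ha))
  refine ⟨U, hU, (expGrowthSup_empiricalLaw_ge_le F.continuous.measurable (fun n i =>
    integrable_exp_of_abs_le F.continuous.measurable F.norm_coe_le_norm _)
    (tendsto_average_cgf_fiberLaw hκ hx F) (a + Λ)).trans_eq ?_⟩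
  rw [← EReal.coe_neg, sub_add_cancel_right]

end Feller

section FiberTightness

variable {X Y : Type*} [TopologicalSpace X] [MeasurableSpace X]

theorem isTightMeasureSet_singleton_averageMeasure {n : ℕ} {m : Fin n → Measure X}
    (hm : ∀ i, IsTightMeasureSet {m i}) : IsTightMeasureSet {averageMeasure m} := by
  simp only [isTightMeasureSet_singleton_iff] at hm ⊢
  intro ε hε
  choose K hK hKε using fun i => hm i ε hε
  refine ⟨⋃ i, K i, isCompact_iUnion hK, ?_⟩
  calc averageMeasure m (⋃ i, K i)ᶜ = (n : ℝ≥0∞)⁻¹ * ∑ i, m i (⋃ i, K i)ᶜ :=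
        averageMeasure_apply m _
    _ ≤ (n : ℝ≥0∞)⁻¹ * ∑ _i : Fin n, ε := by
        gcongr with i
        exact (measure_mono (compl_subset_compl.2 (subset_iUnion K i))).trans (hKε i)
    _ ≤ ε := by
        rw [Finset.sum_const, Finset.card_univ, Fintype.card_fin, nsmul_eq_mul, ← mul_assoc]
        exact mul_le_of_le_one_left' (ENNReal.inv_mul_le_one _)

variable [T2Space X] [TopologicalSpace Y] [T2Space Y] [MeasurableSpace Y]
  [OpensMeasurableSpace (X × Y)] {κ : Kernel X Y} {a : X}

theorem isTightMeasureSet_singleton_fiberLaw (hκ : IsTightMeasureSet {κ a}) :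
    IsTightMeasureSet {fiberLaw κ a} := by
  simpa only [image_singleton, fiberLaw] using hκ.map (Continuous.prodMk_right a)

end FiberTightness

section FiberExponentialTightness

variable {X Y : Type*} [MetricSpace X] [SecondCountableTopology X] [MeasurableSpace X]
  [BorelSpace X] [MetricSpace Y] [SecondCountableTopology Y] [MeasurableSpace Y] [BorelSpace Y]
  [Nonempty X] [Nonempty Y] {κ : Kernel X Y} [IsMarkovKernel κ]

theorem exponentiallyTight_empiricalLaw_fiberLaw (hκ : IsFeller κ)
    (hκtight : ∀ a, IsTightMeasureSet {κ a}) {ρ : Measure X} [IsFiniteMeasure ρ]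
    (hρ : IsTightMeasureSet {ρ ⊗ₘ κ}) {x : (n : ℕ) → Fin n → X}
    (hx : TendstoNarrowly (fun n => averageMeasure fun i => Measure.dirac (x n i)) ρ) :
    ExponentiallyTight fun n => empiricalLaw fun i => fiberLaw κ (x n i) :=
  exponentiallyTight_empiricalLaw <| isTightMeasureSet_range_of_tendstoNarrowly
    (tendstoNarrowly_averageMeasure_fiberLaw hκ hx)
    (fun n => isTightMeasureSet_singleton_averageMeasure fun i =>
      isTightMeasureSet_singleton_fiberLaw (hκtight (x n i))) hρ

end FiberExponentialTightness

open InformationTheory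

section Clip

/-- The truncation of `t` to the interval `[1 / (k + 1), k + 1]`, used to approximate an unbounded
density by densities with a bounded logarithm. -/
def clip (k : ℕ) (t : ℝ) : ℝ :=
  max ((k : ℝ) + 1)⁻¹ (min t (k + 1))

theorem continuous_clip (k : ℕ) : Continuous (clip k) :=
  continuous_const.max (continuous_id.min continuous_const)

theorem inv_le_clip (k : ℕ) (t : ℝ) : ((k : ℝ) + 1)⁻¹ ≤ clip k t :=
  le_max_left _ _

theorem clip_pos (k : ℕ) (t : ℝ) : 0 < clip k t :=
  (inv_pos.2 k.cast_add_one_pos).trans_le (inv_le_clip k t)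

theorem inv_natCast_add_one_le_one (k : ℕ) : ((k : ℝ) + 1)⁻¹ ≤ 1 :=
  inv_le_one_of_one_le₀ (le_add_of_nonneg_left k.cast_nonneg)

theorem clip_le (k : ℕ) (t : ℝ) : clip k t ≤ k + 1 :=
  max_le ((inv_natCast_add_one_le_one k).trans (le_add_of_nonneg_left k.cast_nonneg))
    (min_le_right _ _)

theorem clip_le_add_one (k : ℕ) {t : ℝ} (ht : 0 ≤ t) : clip k t ≤ t + 1 :=
  max_le ((inv_natCast_add_one_le_one k).trans (le_add_of_nonneg_left ht))
    ((min_le_left _ _).trans (le_add_of_nonneg_right zero_le_one))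

theorem abs_log_clip_le (k : ℕ) (t : ℝ) : |Real.log (clip k t)| ≤ Real.log (k + 1) := by
  rw [abs_le, ← Real.log_inv]
  exact ⟨Real.log_le_log (inv_pos.2 k.cast_add_one_pos) (inv_le_clip k t),
    Real.log_le_log (clip_pos k t) (clip_le k t)⟩

theorem tendsto_clip {t : ℝ} (ht : 0 ≤ t) : Tendsto (fun k => clip k t) atTop (𝓝 t) := by
  have hinv : Tendsto (fun k : ℕ => ((k : ℝ) + 1)⁻¹) atTop (𝓝 0) := by
    simpa only [one_div] using tendsto_one_div_add_atTop_nhds_zero_nat (𝕜 := ℝ)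
  have hmin : Tendsto (fun k : ℕ => min t (k + 1)) atTop (𝓝 t) :=
    tendsto_const_nhds.congr' <| by
      filter_upwards [eventually_ge_atTop ⌈t⌉₊] with k hk
      exact (min_eq_left ((Nat.ceil_le.1 hk).trans (le_add_of_nonneg_right zero_le_one))).symm
  simpa only [clip, max_eq_right ht] using hinv.max hmin

theorem tendsto_mul_log_clip_add_one_sub_clip {t : ℝ} (ht : 0 ≤ t) :
    Tendsto (fun k => t * Real.log (clip k t) + 1 - clip k t) atTop (𝓝 (klFun t)) := by
  refine .sub (.add_const 1 ?_) (tendsto_clip ht)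
  rcases ht.eq_or_lt with rfl | ht
  · simp only [zero_mul, tendsto_const_nhds]
  · exact ((tendsto_clip ht.le).log ht.ne').const_mul t

theorem mul_log_clip_add_one_sub_clip_nonneg (k : ℕ) (t : ℝ) :
    0 ≤ t * Real.log (clip k t) + 1 - clip k t := by
  have h_inv_le : ((k : ℝ) + 1)⁻¹ ≤ k + 1 := (inv_le_clip k t).trans (clip_le k t)
  have sub_mul_log_nonneg : 0 ≤ (t - clip k t) * Real.log (clip k t) := by
    rcases le_total t ((k : ℝ) + 1)⁻¹ with hlow | hlow
    · have hclip : clip k t = ((k : ℝ) + 1)⁻¹ := by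
        rw [clip, min_eq_left (hlow.trans h_inv_le), max_eq_left hlow]
      refine mul_nonneg_of_nonpos_of_nonpos (sub_nonpos.2 (hlow.trans_eq hclip.symm)) ?_
      exact Real.log_nonpos (clip_pos k t).le (hclip.trans_le (inv_natCast_add_one_le_one k))
    rcases le_total t (k + 1) with hhigh | hhigh
    · rw [clip, min_eq_left hhigh, max_eq_right hlow, sub_self, zero_mul]
    · have hclip : clip k t = k + 1 := by rw [clip, min_eq_right hhigh, max_eq_right h_inv_le]
      rw [hclip]
      exact mul_nonneg (sub_nonneg.2 hhigh) (Real.log_nonneg (le_add_of_nonneg_left k.cast_nonneg))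
  have hkl := klFun_nonneg (clip_pos k t).le
  rw [klFun] at hkl
  linarith

end Clip

section DonskerVaradhan

theorem relEntNN_eq_klDiv {Z : Type*} [MeasurableSpace Z] (q p : Measure Z)
    [IsProbabilityMeasure q] [IsProbabilityMeasure p] : relEntNN q p = klDiv q p := by
  rw [klDiv_def, probReal_univ, probReal_univ, add_sub_cancel_right]
  rfl

theorem lintegral_rnDeriv_mul_log_clip_add_one_sub_clip {Z : Type*} [MeasurableSpace Z]
    {q p : Measure Z} [IsFiniteMeasure q] [IsFiniteMeasure p] (hac : q ≪ p) (k : ℕ) :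
    ∫⁻ z, ENNReal.ofReal ((q.rnDeriv p z).toReal * Real.log (clip k (q.rnDeriv p z).toReal) + 1 -
      clip k (q.rnDeriv p z).toReal) ∂p =
        ENNReal.ofReal (∫ z, Real.log (clip k (q.rnDeriv p z).toReal) ∂q -
          ∫ z, (clip k (q.rnDeriv p z).toReal - 1) ∂p) := by
  let g (z : Z) : ℝ := (q.rnDeriv p z).toReal
  have hclip : Measurable fun z => clip k (g z) :=
    (continuous_clip k).measurable.comp (Measure.measurable_rnDeriv q p).ennreal_toReal
  have hlog : Integrable (fun z => g z * Real.log (clip k (g z))) p :=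
    (integrable_rnDeriv_smul_iff hac).2 <| .of_bound hclip.log.aestronglyMeasurable _ <|
      .of_forall fun z => abs_log_clip_le k (g z)
  have hsub : Integrable (fun z => clip k (g z) - 1) p :=
    .sub (.of_bound hclip.aestronglyMeasurable (k + 1) <| .of_forall fun z => by
      rw [Real.norm_of_nonneg (clip_pos k _).le]
      exact clip_le k _) (integrable_const 1)
  have hnonneg (z) : 0 ≤ g z * Real.log (clip k (g z)) - (clip k (g z) - 1) := by
    linarith [mul_log_clip_add_one_sub_clip_nonneg k (g z)]
  rw [← integral_rnDeriv_smul hac]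
  simp only [smul_eq_mul]
  rw [← integral_sub hlog hsub]
  refine Eq.trans ?_ (ofReal_integral_eq_lintegral_ofReal (hlog.sub hsub) (.of_forall hnonneg)).symm
  simp only [Pi.sub_apply, sub_sub_eq_add_sub, g]

variable {Z : Type*} [TopologicalSpace Z] [MeasurableSpace Z] [BorelSpace Z]

theorem exists_boundedContinuous_tendsto_ae [NormalSpace Z] (ν : Measure Z) [IsFiniteMeasure ν]
    [ν.WeaklyRegular] {F : Z → ℝ} (hF : Measurable F) {M : ℝ} (hM : ∀ z, |F z| ≤ M) :
    ∃ f : ℕ → BoundedContinuousFunction Z ℝ, (∀ j z, |f j z| ≤ M) ∧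
      ∀ᵐ z ∂ν, Tendsto (fun j => f j z) atTop (𝓝 (F z)) := by
  obtain hZ | ⟨⟨z₀⟩⟩ := isEmpty_or_nonempty Z
  · exact ⟨0, fun _ => isEmptyElim, .of_forall isEmptyElim⟩
  have hM₀ : -M ≤ M := neg_le_self ((abs_nonneg _).trans (hM z₀))
  have hmem : MemLp F 1 ν := .of_bound hF.aestronglyMeasurable M (.of_forall hM)
  choose g hg _ using fun j : ℕ => hmem.exists_boundedContinuous_eLpNorm_sub_le ENNReal.one_ne_top
    (ENNReal.inv_ne_zero.2 (ENNReal.natCast_ne_top j))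
  have hlim : Tendsto (fun j => eLpNorm (⇑(g j) - F) 1 ν) atTop (𝓝 0) :=
    tendsto_of_tendsto_of_tendsto_of_le_of_le tendsto_const_nhds
      ENNReal.tendsto_inv_nat_nhds_zero (fun _ => zero_le) fun j =>
        (eLpNorm_sub_comm _ _ _ _).trans_le (hg j)
  obtain ⟨n, -, hn⟩ := (tendstoInMeasure_of_tendsto_eLpNorm one_ne_zero
    (fun j => (g j).continuous.aestronglyMeasurable) hF.aestronglyMeasurable
      hlim).exists_seq_tendsto_ae
  let c (t : ℝ) : ℝ := projIcc (-M) M hM₀ t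
  have hc : Continuous c := continuous_subtype_val.comp continuous_projIcc
  have hcM (t) : |c t| ≤ M := abs_le.2 (projIcc (-M) M hM₀ t).2
  refine ⟨fun j => .ofNormedAddCommGroup (c ∘ g (n j)) (hc.comp (g (n j)).continuous) M
    fun z => hcM _, fun j z => hcM _, ?_⟩
  filter_upwards [hn] with z hz
  have hcF : c (F z) = F z := congrArg Subtype.val (projIcc_of_mem hM₀ (abs_le.1 (hM z)))
  exact hcF ▸ (hc.tendsto (F z)).comp hz

variable [TopologicalSpace.PseudoMetrizableSpace Z] {q p : Measure Z}
  [IsFiniteMeasure q] [IsFiniteMeasure p] {a : ℝ}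

theorem integral_sub_integral_exp_sub_one_le_of_boundedContinuous
    (h : ∀ f : BoundedContinuousFunction Z ℝ, ∫ z, f z ∂q - ∫ z, (Real.exp (f z) - 1) ∂p ≤ a)
    {F : Z → ℝ} (hF : Measurable F) {M : ℝ} (hM : ∀ z, |F z| ≤ M) :
    ∫ z, F z ∂q - ∫ z, (Real.exp (F z) - 1) ∂p ≤ a := by
  obtain ⟨f, hf, hlim⟩ := exists_boundedContinuous_tendsto_ae (q + p) hF hM
  rw [ae_add_measure_iff] at hlim
  have hq : Tendsto (fun j => ∫ z, f j z ∂q) atTop (𝓝 (∫ z, F z ∂q)) :=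
    tendsto_integral_of_dominated_convergence (fun _ => M)
      (fun j => (f j).continuous.aestronglyMeasurable) (integrable_const _)
      (fun j => .of_forall (hf j)) hlim.1
  have hp : Tendsto (fun j => ∫ z, (Real.exp (f j z) - 1) ∂p) atTop
      (𝓝 (∫ z, (Real.exp (F z) - 1) ∂p)) := by
    refine tendsto_integral_of_dominated_convergence (fun _ => Real.exp M + 1)
      (fun j => ((f j).continuous.rexp.sub continuous_const).aestronglyMeasurable)
      (integrable_const _) (fun j => .of_forall fun z => (norm_sub_le _ _).trans ?_) ?_
    · rw [Real.norm_of_nonneg (Real.exp_pos _).le, norm_one]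
      gcongr
      exact (le_abs_self _).trans (hf j z)
    · filter_upwards [hlim.2] with z hz
      exact hz.rexp.sub_const 1
  exact le_of_tendsto' (hq.sub hp) fun j => h (f j)

theorem absolutelyContinuous_of_integral_sub_integral_exp_sub_one_le
    (h : ∀ f : BoundedContinuousFunction Z ℝ, ∫ z, f z ∂q - ∫ z, (Real.exp (f z) - 1) ∂p ≤ a) :
    q ≪ p := by
  refine .mk fun s hs hps => ?_
  by_contra hqs
  obtain ⟨k, hk⟩ := exists_nat_gt (a / q.real s)
  have hexp : ∫ z, (Real.exp (s.indicator (fun _ => (k : ℝ)) z) - 1) ∂p = 0 := by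
    refine integral_eq_zero_of_ae ?_
    filter_upwards [measure_eq_zero_iff_ae_notMem.1 hps] with z hz
    simp only [indicator_of_notMem hz, Real.exp_zero, sub_self, Pi.zero_apply]
  have hle := integral_sub_integral_exp_sub_one_le_of_boundedContinuous h
    (F := s.indicator fun _ => (k : ℝ)) (measurable_const.indicator hs) (M := k) fun z => by
      by_cases hz : z ∈ s <;> simp [hz]
  rw [hexp, sub_zero, integral_indicator_const _ hs, smul_eq_mul, mul_comm] at hle
  exact hk.not_ge ((le_div_iff₀ (ENNReal.toReal_pos hqs (measure_ne_top _ _))).2 hle)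

theorem klDiv_le_of_integral_sub_integral_exp_sub_one_le
    (h : ∀ f : BoundedContinuousFunction Z ℝ, ∫ z, f z ∂q - ∫ z, (Real.exp (f z) - 1) ∂p ≤ a) :
    klDiv q p ≤ ENNReal.ofReal a := by
  have hac := absolutelyContinuous_of_integral_sub_integral_exp_sub_one_le h
  let g (z : Z) : ℝ := (q.rnDeriv p z).toReal
  have hg : Measurable g := (Measure.measurable_rnDeriv q p).ennreal_toReal
  have hclip (k) : Measurable fun z => clip k (g z) := (continuous_clip k).measurable.comp hg
  let φ (k : ℕ) (z : Z) : ℝ := g z * Real.log (clip k (g z)) + 1 - clip k (g z)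
  have hφ (k) : ∫⁻ z, ENNReal.ofReal (φ k z) ∂p ≤ ENNReal.ofReal a := by
    have hvar := integral_sub_integral_exp_sub_one_le_of_boundedContinuous h (hclip k).log
      fun z => abs_log_clip_le k (g z)
    simp only [Real.exp_log (clip_pos k _)] at hvar
    rw [lintegral_rnDeriv_mul_log_clip_add_one_sub_clip hac]
    exact ENNReal.ofReal_le_ofReal hvar
  have hlim (z) : Tendsto (fun k => ENNReal.ofReal (φ k z)) atTop
      (𝓝 (ENNReal.ofReal (klFun (g z)))) :=
    ENNReal.tendsto_ofReal (tendsto_mul_log_clip_add_one_sub_clip ENNReal.toReal_nonneg)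
  calc klDiv q p = ∫⁻ z, ENNReal.ofReal (klFun (g z)) ∂p := by
        rw [klDiv_eq_lintegral_klFun, if_pos hac]
    _ = ∫⁻ z, liminf (fun k => ENNReal.ofReal (φ k z)) atTop ∂p := by
        simp only [(hlim _).liminf_eq]
    _ ≤ liminf (fun k => ∫⁻ z, ENNReal.ofReal (φ k z) ∂p) atTop :=
        lintegral_liminf_le fun k => (((hg.mul (hclip k).log).add_const 1).sub
          (hclip k)).ennreal_ofReal
    _ ≤ ENNReal.ofReal a := liminf_le_of_le (by isBoundedDefault) fun b hb =>
        (hb.exists).elim fun k hk => hk.trans (hφ k)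

end DonskerVaradhan

section VariationalBound

variable {X Y : Type*} [MeasurableSpace X] [MeasurableSpace Y] {κ : Kernel X Y} [IsMarkovKernel κ]
  {ρ : Measure X}

theorem integral_logMGF_le [IsFiniteMeasure ρ] {F : X × Y → ℝ} (hF : Measurable F) {M : ℝ}
    (hM : ∀ z, |F z| ≤ M) :
    ∫ a, logMGF κ F a ∂ρ ≤ ∫ z, (Real.exp (F z) - 1) ∂(ρ ⊗ₘ κ) := by
  have hexp : Integrable (fun z => Real.exp (F z)) (ρ ⊗ₘ κ) := integrable_exp_of_abs_le hF hM _
  have hΛ := abs_logMGF_le (κ := κ) hF hM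
  have hexpΛ : Integrable (fun a => Real.exp (logMGF κ F a) - 1) ρ :=
    (integrable_exp_of_abs_le (measurable_logMGF hF) hΛ ρ).sub (integrable_const 1)
  calc ∫ a, logMGF κ F a ∂ρ ≤ ∫ a, (Real.exp (logMGF κ F a) - 1) ∂ρ :=
        integral_mono (.of_bound (measurable_logMGF hF).aestronglyMeasurable M (.of_forall hΛ))
          hexpΛ fun a => le_sub_iff_add_le.2 (Real.add_one_le_exp _)
    _ = ∫ a, ∫ b, (Real.exp (F (a, b)) - 1) ∂κ a ∂ρ := by
        simp only [exp_logMGF hF hM, integral_sub (integrable_exp_section hF hM _)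
          (integrable_const _), integral_const, probReal_univ, one_smul]
    _ = ∫ z, (Real.exp (F z) - 1) ∂(ρ ⊗ₘ κ) :=
        (Measure.integral_compProd (hexp.sub (integrable_const 1))).symm

variable [TopologicalSpace X] [BorelSpace X] [TopologicalSpace Y] [IsFiniteMeasure ρ]
  {q : Measure (X × Y)} [IsFiniteMeasure q] {a : ℝ}

theorem fst_eq_of_integral_sub_integral_logMGF_le [HasOuterApproxClosed X]
    (h : ∀ F : BoundedContinuousFunction (X × Y) ℝ,
      ∫ z, F z ∂q - ∫ b, logMGF κ F b ∂ρ ≤ a) : q.fst = ρ := by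
  refine ext_of_forall_integral_eq_of_IsFiniteMeasure fun f => ?_
  rw [Measure.fst, integral_map measurable_fst.aemeasurable f.continuous.aestronglyMeasurable]
  by_contra hne
  set d : ℝ := ∫ z, f z.1 ∂q - ∫ b, f b ∂ρ
  -- Scaling `f` by `t` makes both integrals grow linearly in `t`.
  have mul_le (t : ℝ) : t * d ≤ a := by
    have ht := h (t • f.compContinuous ⟨Prod.fst, continuous_fst⟩)
    have hΛ (b : X) : logMGF κ (t • f.compContinuous ⟨Prod.fst, continuous_fst⟩) b = t * f b :=
      logMGF_comp_fst (fun b => t * f b) b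
    have hfst : ∫ z, (t • f.compContinuous ⟨Prod.fst, continuous_fst⟩) z ∂q =
        t * ∫ z, f z.1 ∂q := integral_const_mul t _
    simpa only [hΛ, hfst, integral_const_mul, ← mul_sub] using ht
  have hlt := mul_le ((a + 1) / d)
  rw [div_mul_cancel₀ _ (sub_ne_zero.2 hne)] at hlt
  exact (lt_add_one a).not_ge hlt

variable [BorelSpace Y] [SecondCountableTopologyEither X Y]
  [TopologicalSpace.PseudoMetrizableSpace X]
  [TopologicalSpace.PseudoMetrizableSpace Y]

theorem klDiv_compProd_le_of_integral_sub_integral_logMGF_le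
    (h : ∀ F : BoundedContinuousFunction (X × Y) ℝ,
      ∫ z, F z ∂q - ∫ b, logMGF κ F b ∂ρ ≤ a) : klDiv q (ρ ⊗ₘ κ) ≤ ENNReal.ofReal a :=
  klDiv_le_of_integral_sub_integral_exp_sub_one_le fun F =>
    (sub_le_sub_left (integral_logMGF_le F.continuous.measurable F.norm_coe_le_norm) _).trans (h F)

end VariationalBound

section Densities

theorem klFun_le_one_add_klFun {s t : ℝ} (hs : 0 ≤ s) (hst : s ≤ t) :
    klFun s ≤ 1 + klFun t := by
  have ht := klFun_nonneg (hs.trans hst)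
  have hmax := convexOn_klFun.le_max_of_mem_Icc (x := 0) (y := t) (z := s)
    (mem_Ici.2 le_rfl) (mem_Ici.2 (hs.trans hst)) ⟨hs, hst⟩
  rw [klFun_zero] at hmax
  exact hmax.trans (max_le (le_add_of_nonneg_right ht) (le_add_of_nonneg_left zero_le_one))

theorem klFun_two_mul_add_one_le {t : ℝ} (ht : 0 ≤ t) :
    klFun (2 * (t + 1)) ≤ 2 * klFun t + 4 * t + 1 := by
  have hpos : 0 < t + 1 := add_pos_of_nonneg_of_pos ht one_pos
  have log_le : Real.log (t + 1) ≤ t := by linarith [Real.log_le_sub_one_of_pos hpos]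
  have log_two_le : Real.log 2 ≤ 1 := by linarith [Real.log_le_sub_one_of_pos (zero_lt_two' ℝ)]
  have mul_log_le : t * Real.log (t + 1) ≤ t * Real.log t + 1 := by
    rcases ht.eq_or_lt with rfl | ht
    · simp only [zero_mul, zero_add, zero_le_one]
    · have hdiv := Real.log_le_sub_one_of_pos (div_pos hpos ht)
      rw [Real.log_div hpos.ne' ht.ne', sub_le_iff_le_add] at hdiv
      calc t * Real.log (t + 1) ≤ t * ((t + 1) / t - 1 + Real.log t) := by gcongr
        _ = t * Real.log t + 1 := by field_simp; ring
  rw [klFun, klFun, Real.log_mul two_ne_zero hpos.ne']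
  nlinarith

theorem integrable_klFun_two_mul_add_one {Z : Type*} [MeasurableSpace Z] {p : Measure Z}
    [IsFiniteMeasure p] {g : Z → ℝ} (hg : Integrable g p) (hnonneg : ∀ z, 0 ≤ g z)
    (hkl : Integrable (fun z => klFun (g z)) p) :
    Integrable (fun z => klFun (2 * (g z + 1))) p := by
  refine (((hkl.const_mul 2).add (hg.const_mul 4)).add (integrable_const 1)).mono'
    (continuous_klFun.comp_aestronglyMeasurable
      ((hg.add (integrable_const 1)).const_mul 2).aestronglyMeasurable) (.of_forall fun z => ?_)
  rw [Real.norm_of_nonneg (klFun_nonneg (by linarith [hnonneg z]))]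
  exact klFun_two_mul_add_one_le (hnonneg z)

theorem withDensity_ofReal_toReal_rnDeriv {Z : Type*} [MeasurableSpace Z] {q p : Measure Z}
    [SigmaFinite q] [q.HaveLebesgueDecomposition p] (hac : q ≪ p) :
    p.withDensity (fun z => ENNReal.ofReal (q.rnDeriv p z).toReal) = q := by
  refine (withDensity_congr_ae ?_).trans (Measure.withDensity_rnDeriv_eq q p hac)
  filter_upwards [q.rnDeriv_lt_top p] with z hz using ENNReal.ofReal_toReal hz.ne

variable {Z : Type*} [MeasurableSpace Z] [TopologicalSpace Z] [OpensMeasurableSpace Z]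
  {μ : ℕ → Measure (ProbabilityMeasure Z)} {p : Measure Z}
  {q : ℕ → ProbabilityMeasure Z} {q₀ : ProbabilityMeasure Z} {h : ℕ → Z → ℝ} {h₀ G : Z → ℝ}

theorem tendsto_of_tendsto_density
    (hq : ∀ k, (q k : Measure Z) = p.withDensity fun z => ENNReal.ofReal (h k z))
    (hq₀ : (q₀ : Measure Z) = p.withDensity fun z => ENNReal.ofReal (h₀ z))
    (hmeas : ∀ k, Measurable (h k)) (hmeas₀ : Measurable h₀) (hnonneg : ∀ k z, 0 ≤ h k z)
    (hle : ∀ k z, h k z ≤ G z) (hG : Integrable G p)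
    (hlim : ∀ᵐ z ∂p, Tendsto (fun k => h k z) atTop (𝓝 (h₀ z))) : Tendsto q atTop (𝓝 q₀) := by
  refine ProbabilityMeasure.tendsto_iff_forall_integral_tendsto.2 fun f => ?_
  simp only [hq, hq₀, integral_withDensity_eq_integral_toReal_smul (hmeas _).ennreal_ofReal
    (.of_forall fun _ => ENNReal.ofReal_lt_top), integral_withDensity_eq_integral_toReal_smul
    hmeas₀.ennreal_ofReal (.of_forall fun _ => ENNReal.ofReal_lt_top), smul_eq_mul]
  refine tendsto_integral_of_dominated_convergence (fun z => G z * ‖f‖) (fun k =>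
    ((hmeas k).ennreal_ofReal.ennreal_toReal.mul f.continuous.measurable).aestronglyMeasurable)
    (hG.mul_const _) (fun k => .of_forall fun z => ?_) ?_
  · rw [norm_mul, ENNReal.toReal_ofReal (hnonneg k z), Real.norm_of_nonneg (hnonneg k z)]
    have hGz := (hnonneg k z).trans (hle k z)
    gcongr
    exacts [hle k z, f.norm_coe_le_norm z]
  · filter_upwards [hlim] with z hz
    exact .mul_const _ ((ENNReal.tendsto_toReal ENNReal.ofReal_ne_top).comp
      (ENNReal.tendsto_ofReal hz))

theorem LowerBoundAt.of_tendsto_density [IsFiniteMeasure p]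
    (hq : ∀ k, (q k : Measure Z) = p.withDensity fun z => ENNReal.ofReal (h k z))
    (hq₀ : (q₀ : Measure Z) = p.withDensity fun z => ENNReal.ofReal (h₀ z))
    (hmeas : ∀ k, Measurable (h k)) (hmeas₀ : Measurable h₀) (hnonneg : ∀ k z, 0 ≤ h k z)
    (hle : ∀ k z, h k z ≤ G z) (hG : Integrable G p)
    (hklG : Integrable (fun z => klFun (G z)) p)
    (hlim : ∀ᵐ z ∂p, Tendsto (fun k => h k z) atTop (𝓝 (h₀ z)))
    (hlower : ∀ k, LowerBoundAt μ (q k) ((∫ z, klFun (h k z) ∂p : ℝ) : EReal)) :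
    LowerBoundAt μ q₀ ((∫ z, klFun (h₀ z) ∂p : ℝ) : EReal) := by
  have hentropy : Tendsto (fun k => ∫ z, klFun (h k z) ∂p) atTop (𝓝 (∫ z, klFun (h₀ z) ∂p)) := by
    refine tendsto_integral_of_dominated_convergence (fun z => 1 + klFun (G z))
      (fun k => (continuous_klFun.measurable.comp (hmeas k)).aestronglyMeasurable)
      ((integrable_const 1).add hklG) (fun k => .of_forall fun z => ?_) ?_
    · rw [Real.norm_of_nonneg (klFun_nonneg (hnonneg k z))]
      exact klFun_le_one_add_klFun (hnonneg k z) (hle k z)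
    · filter_upwards [hlim] with z hz
      exact (continuous_klFun.tendsto _).comp hz
  exact .of_tendsto (tendsto_of_tendsto_density hq hq₀ hmeas hmeas₀ hnonneg hle hG hlim)
    ((continuous_coe_real_ereal.tendsto _).comp hentropy) hlower

end Densities

section FiberDensities

variable {X Y : Type*} [MeasurableSpace X] [MeasurableSpace Y] {κ : Kernel X Y} [IsMarkovKernel κ]

theorem ae_compProd_fst_of_ae {ρ : Measure X} [SFinite ρ] {P : X → Prop} (h : ∀ᵐ a ∂ρ, P a) :
    ∀ᵐ z ∂(ρ ⊗ₘ κ), P z.1 := by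
  refine ae_of_ae_map measurable_fst.aemeasurable ?_
  rwa [← Measure.fst, Measure.fst_compProd]

theorem tendsto_logMGF {f : ℕ → X × Y → ℝ} {F : X × Y → ℝ} {M : ℝ} (hf : ∀ k, Measurable (f k))
    (hF : Measurable F) (hfM : ∀ k z, |f k z| ≤ M) (hFM : ∀ z, |F z| ≤ M) {a : X}
    (hlim : ∀ᵐ b ∂κ a, Tendsto (fun k => f k (a, b)) atTop (𝓝 (F (a, b)))) :
    Tendsto (fun k => logMGF κ (f k) a) atTop (𝓝 (logMGF κ F a)) := by
  simp only [logMGF_eq_log_integral]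
  refine Tendsto.log ?_ (integral_exp_pos (integrable_exp_section hF hFM a)).ne'
  refine tendsto_integral_of_dominated_convergence (fun _ => Real.exp M)
    (fun k => ((hf k).comp measurable_prodMk_left).exp.aestronglyMeasurable)
    (integrable_const _) (fun k => .of_forall fun b => ?_) ?_
  · rw [Real.norm_of_nonneg (Real.exp_pos _).le, Real.exp_le_exp]
    exact (le_abs_self _).trans (hfM k (a, b))
  · filter_upwards [hlim] with b hb using hb.rexp

theorem abs_sub_logMGF_le {F : X × Y → ℝ} {M : ℝ} (hF : Measurable F) (hM : ∀ z, |F z| ≤ M)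
    (z : X × Y) : |F z - logMGF κ F z.1| ≤ M + M :=
  (abs_sub _ _).trans (add_le_add (hM z) (abs_logMGF_le hF hM z.1))

theorem integral_sub_integral_logMGF_eq_integral_klFun {ρ : Measure X} [IsProbabilityMeasure ρ]
    {F : X × Y → ℝ} {M : ℝ} (hF : Measurable F) (hM : ∀ z, |F z| ≤ M) :
    ∫ z, F z ∂fiberTilted ρ κ F - ∫ a, logMGF κ F a ∂ρ =
      ∫ z, klFun (Real.exp (F z - logMGF κ F z.1)) ∂(ρ ⊗ₘ κ) := by
  have := isProbabilityMeasure_fiberTilted (ρ := ρ) (κ := κ) hF hM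
  have hΛ : Measurable fun z : X × Y => logMGF κ F z.1 := (measurable_logMGF hF).comp measurable_fst
  have hD := abs_sub_logMGF_le (κ := κ) hF hM
  have hexp : Integrable (fun z => Real.exp (F z - logMGF κ F z.1)) (ρ ⊗ₘ κ) :=
    integrable_exp_of_abs_le (hF.sub hΛ) hD _
  have integral_fst : ∫ a, logMGF κ F a ∂ρ = ∫ z, logMGF κ F z.1 ∂fiberTilted ρ κ F := by
    conv_lhs => rw [← fst_fiberTilted (κ := κ) (ρ := ρ) hF hM, Measure.fst,
      integral_map measurable_fst.aemeasurable (measurable_logMGF hF).aestronglyMeasurable]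
  have integral_exp : ∫ z, Real.exp (F z - logMGF κ F z.1) ∂(ρ ⊗ₘ κ) = 1 := by
    simpa only [mul_one, integral_const, probReal_univ, one_smul] using
      (integral_fiberTilted (ρ := ρ) (κ := κ) hF fun _ => 1).symm
  have hmul : Integrable (fun z => Real.exp (F z - logMGF κ F z.1) * (F z - logMGF κ F z.1))
      (ρ ⊗ₘ κ) :=
    hexp.mul_bdd (hF.sub hΛ).aestronglyMeasurable (.of_forall hD)
  calc ∫ z, F z ∂fiberTilted ρ κ F - ∫ a, logMGF κ F a ∂ρ
      = ∫ z, (F z - logMGF κ F z.1) ∂fiberTilted ρ κ F := by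
        rw [integral_fst, integral_sub (.of_bound hF.aestronglyMeasurable M (.of_forall hM))
          (.of_bound hΛ.aestronglyMeasurable M (.of_forall fun z => abs_logMGF_le hF hM z.1))]
    _ = ∫ z, Real.exp (F z - logMGF κ F z.1) * (F z - logMGF κ F z.1) ∂(ρ ⊗ₘ κ) :=
        integral_fiberTilted hF _
    _ = ∫ z, klFun (Real.exp (F z - logMGF κ F z.1)) ∂(ρ ⊗ₘ κ) := by
        have hadd : Integrable (fun z => Real.exp (F z - logMGF κ F z.1) *
            (F z - logMGF κ F z.1) + 1) (ρ ⊗ₘ κ) := hmul.add (integrable_const 1)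
        simp only [klFun, Real.log_exp]
        rw [integral_sub hadd hexp, integral_add hmul (integrable_const 1), integral_exp,
          integral_const, probReal_univ, one_smul, add_sub_cancel_right]

theorem ae_lintegral_section_eq_one {ρ : Measure X} [SigmaFinite ρ] {f : X × Y → ℝ≥0∞}
    (hf : Measurable f) (hfst : ((ρ ⊗ₘ κ).withDensity f).fst = ρ) :
    ∀ᵐ a ∂ρ, ∫⁻ b, f (a, b) ∂κ a = 1 := by
  refine ae_eq_of_forall_setLIntegral_eq_of_sigmaFinite hf.lintegral_kernel_prod_right'
    measurable_const fun s hs _ => ?_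
  have hs_fst := congrArg (· s) hfst
  simp only [Measure.fst_apply hs] at hs_fst
  rw [withDensity_apply _ (measurable_fst hs), ← prod_univ,
    Measure.setLIntegral_compProd hf hs .univ] at hs_fst
  simpa only [Measure.restrict_univ, setLIntegral_const, one_mul] using hs_fst

end FiberDensities

section ClippedDensities

theorem tendsto_integral_clip {Z : Type*} [MeasurableSpace Z] {ν : Measure Z} [IsFiniteMeasure ν]
    {g : Z → ℝ} (hg : Integrable g ν) (hnonneg : ∀ z, 0 ≤ g z) :
    Tendsto (fun k => ∫ z, clip k (g z) ∂ν) atTop (𝓝 (∫ z, g z ∂ν)) :=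
  tendsto_integral_of_dominated_convergence (fun z => g z + 1)
    (fun k => (continuous_clip k).comp_aestronglyMeasurable hg.aestronglyMeasurable)
    (hg.add (integrable_const 1))
    (fun k => .of_forall fun z => (Real.norm_of_nonneg (clip_pos k _).le).trans_le
      (clip_le_add_one k (hnonneg z)))
    (.of_forall fun z => tendsto_clip (hnonneg z))

variable {X Y : Type*} [MeasurableSpace X] [MeasurableSpace Y] {κ : Kernel X Y}

/-- The logarithm of the density `g` clipped at level `k`, on those fibers of `κ` where the clipped
density has mean at least `1 / 2`, and `0` on the other fibers. Tilting by it approximates the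
measure with density `g`, and the lower bound on the mean keeps the tilted densities dominated. -/
def clippedLog (κ : Kernel X Y) (g : X × Y → ℝ) (k : ℕ) (z : X × Y) : ℝ :=
  if 1 / 2 ≤ ∫ b, clip k (g (z.1, b)) ∂κ z.1 then Real.log (clip k (g z)) else 0

theorem abs_clippedLog_le (g : X × Y → ℝ) (k : ℕ) (z : X × Y) :
    |clippedLog κ g k z| ≤ Real.log (k + 1) := by
  rw [clippedLog]
  split_ifs
  · exact abs_log_clip_le k (g z)
  · rw [abs_zero]
    exact Real.log_nonneg (le_add_of_nonneg_left k.cast_nonneg)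

variable [IsMarkovKernel κ] {g : X × Y → ℝ}

theorem measurable_clippedLog (hg : Measurable g) (k : ℕ) : Measurable (clippedLog κ g k) := by
  have hclip : Measurable fun z => clip k (g z) := (continuous_clip k).measurable.comp hg
  exact .ite (measurableSet_le measurable_const <|
    (hclip.stronglyMeasurable.integral_kernel_prod_right' (κ := κ)).measurable.comp
      measurable_fst) hclip.log measurable_const

theorem exp_clippedLog_sub_logMGF (g : X × Y → ℝ) (k : ℕ) (z : X × Y) :
    Real.exp (clippedLog κ g k z - logMGF κ (clippedLog κ g k) z.1) =
      if 1 / 2 ≤ ∫ b, clip k (g (z.1, b)) ∂κ z.1 then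
        clip k (g z) / ∫ b, clip k (g (z.1, b)) ∂κ z.1 else 1 := by
  simp only [logMGF_eq_log_integral, clippedLog]
  split_ifs with hmean
  · simp only [Real.exp_sub, Real.exp_log (clip_pos k _),
      Real.exp_log (one_half_pos.trans_le hmean)]
  · simp only [Real.exp_zero, integral_const, probReal_univ, one_smul, Real.log_one, sub_zero]

theorem exp_clippedLog_sub_logMGF_le (k : ℕ) {z : X × Y} (hz : 0 ≤ g z) :
    Real.exp (clippedLog κ g k z - logMGF κ (clippedLog κ g k) z.1) ≤ 2 * (g z + 1) := by
  rw [exp_clippedLog_sub_logMGF]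
  split_ifs with hmean
  · rw [div_le_iff₀ (one_half_pos.trans_le hmean)]
    nlinarith [clip_le_add_one k hz]
  · linarith

theorem tendsto_exp_clippedLog_sub_logMGF (hg : Measurable g) (hnonneg : ∀ z, 0 ≤ g z)
    {z : X × Y} (hz : ∫⁻ b, ENNReal.ofReal (g (z.1, b)) ∂κ z.1 = 1) :
    Tendsto (fun k => Real.exp (clippedLog κ g k z - logMGF κ (clippedLog κ g k) z.1)) atTop
      (𝓝 (g z)) := by
  have hsection : Measurable fun b => g (z.1, b) := hg.comp measurable_prodMk_left
  have hint : Integrable (fun b => g (z.1, b)) (κ z.1) :=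
    (lintegral_ofReal_ne_top_iff_integrable hsection.aestronglyMeasurable
      (.of_forall fun b => hnonneg _)).1 (hz ▸ ENNReal.one_ne_top)
  have hmean : Tendsto (fun k => ∫ b, clip k (g (z.1, b)) ∂κ z.1) atTop (𝓝 1) := by
    have hone : ∫ b, g (z.1, b) ∂κ z.1 = 1 := by
      rw [integral_eq_lintegral_of_nonneg_ae (.of_forall fun b => hnonneg _)
        hsection.aestronglyMeasurable, hz, ENNReal.toReal_one]
    exact hone ▸ tendsto_integral_clip hint fun b => hnonneg _
  have hdiv := (tendsto_clip (hnonneg z)).div hmean one_ne_zero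
  rw [div_one] at hdiv
  refine hdiv.congr' ?_
  filter_upwards [hmean.eventually (eventually_ge_nhds one_half_lt_one)] with k hk
  rw [exp_clippedLog_sub_logMGF, if_pos hk, Pi.div_apply]

end ClippedDensities

section FiberLowerBound

variable {X Y : Type*} [TopologicalSpace X] [MeasurableSpace X] [BorelSpace X]
  [TopologicalSpace Y] [MeasurableSpace Y] [BorelSpace Y]
  [SecondCountableTopology X] [SecondCountableTopology Y]
  [TopologicalSpace.PseudoMetrizableSpace X] [TopologicalSpace.PseudoMetrizableSpace Y]
  [Nonempty X] [Nonempty Y] {κ : Kernel X Y} [IsMarkovKernel κ] {ρ : Measure X}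
  [IsProbabilityMeasure ρ] {x : (n : ℕ) → Fin n → X} {q : ProbabilityMeasure (X × Y)}

theorem lowerBoundAt_fiberTilted (hκ : IsFeller κ)
    (hx : TendstoNarrowly (fun n => averageMeasure fun i => Measure.dirac (x n i)) ρ)
    {F : X × Y → ℝ} (hF : Measurable F) {M : ℝ} (hM : ∀ z, |F z| ≤ M)
    (hq : (q : Measure (X × Y)) = fiberTilted ρ κ F) :
    LowerBoundAt (fun n => empiricalLaw fun i => fiberLaw κ (x n i)) q
      ((∫ z, klFun (Real.exp (F z - logMGF κ F z.1)) ∂(ρ ⊗ₘ κ) : ℝ) : EReal) := by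
  obtain ⟨f, hf, hlim⟩ := exists_boundedContinuous_tendsto_ae (ρ ⊗ₘ κ) hF hM
  have hmeas (k) : Measurable (f k) := (f k).continuous.measurable
  have hlimΛ : ∀ᵐ z ∂(ρ ⊗ₘ κ), Tendsto (fun k => logMGF κ (f k) z.1) atTop
      (𝓝 (logMGF κ F z.1)) := by
    refine ae_compProd_fst_of_ae (P := fun a => Tendsto (fun k => logMGF κ (f k) a) atTop
      (𝓝 (logMGF κ F a))) ?_
    filter_upwards [Measure.ae_ae_of_ae_compProd hlim] with a ha
    exact tendsto_logMGF hmeas hF hf hM ha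
  let qf (k : ℕ) : ProbabilityMeasure (X × Y) :=
    ⟨fiberTilted ρ κ (f k), isProbabilityMeasure_fiberTilted (hmeas k) (hf k)⟩
  refine .of_tendsto_density (q := qf) (G := fun _ => Real.exp (M + M)) (fun _ => rfl) hq
    (fun k => measurable_exp_sub_logMGF (hmeas k)) (measurable_exp_sub_logMGF hF)
    (fun _ _ => (Real.exp_pos _).le) (fun k z => Real.exp_le_exp.2 <|
      (le_abs_self _).trans (abs_sub_logMGF_le (hmeas k) (hf k) z))
    (integrable_const _) (integrable_const _) ?_ fun k => ?_
  · filter_upwards [hlim, hlimΛ] with z hz hzΛ using (hz.sub hzΛ).rexp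
  · rw [← integral_sub_integral_logMGF_eq_integral_klFun (hmeas k) (hf k)]
    exact lowerBoundAt_fiberTilted_of_continuous hκ hx (f k) rfl

theorem lowerBoundAt_klDiv (hκ : IsFeller κ)
    (hx : TendstoNarrowly (fun n => averageMeasure fun i => Measure.dirac (x n i)) ρ)
    (hfst : (q : Measure (X × Y)).fst = ρ) (hkl : klDiv (q : Measure (X × Y)) (ρ ⊗ₘ κ) ≠ ⊤) :
    LowerBoundAt (fun n => empiricalLaw fun i => fiberLaw κ (x n i)) q
      (klDiv (q : Measure (X × Y)) (ρ ⊗ₘ κ)) := by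
  obtain ⟨hac, hllr⟩ := klDiv_ne_top_iff.1 hkl
  let g (z : X × Y) : ℝ := ((q : Measure (X × Y)).rnDeriv (ρ ⊗ₘ κ) z).toReal
  have hg : Measurable g := (Measure.measurable_rnDeriv _ _).ennreal_toReal
  have hnonneg (z) : 0 ≤ g z := ENNReal.toReal_nonneg
  have hgint : Integrable g (ρ ⊗ₘ κ) := Measure.integrable_toReal_rnDeriv
  have hqg : (q : Measure (X × Y)) = (ρ ⊗ₘ κ).withDensity fun z => ENNReal.ofReal (g z) :=
    (withDensity_ofReal_toReal_rnDeriv hac).symm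
  have hmean : ∀ᵐ z ∂(ρ ⊗ₘ κ), ∫⁻ b, ENNReal.ofReal (g (z.1, b)) ∂κ z.1 = 1 :=
    ae_compProd_fst_of_ae (ae_lintegral_section_eq_one hg.ennreal_ofReal (hqg ▸ hfst))
  let F (k : ℕ) : X × Y → ℝ := clippedLog κ g k
  have hF (k) : Measurable (F k) := measurable_clippedLog hg k
  let qF (k : ℕ) : ProbabilityMeasure (X × Y) :=
    ⟨fiberTilted ρ κ (F k), isProbabilityMeasure_fiberTilted (hF k) (abs_clippedLog_le g k)⟩
  rw [← EReal.coe_ennreal_toReal hkl, toReal_klDiv_eq_integral_klFun hac]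
  refine .of_tendsto_density (q := qF) (G := fun z => 2 * (g z + 1)) (fun _ => rfl) hqg
    (fun k => measurable_exp_sub_logMGF (hF k)) hg (fun _ _ => (Real.exp_pos _).le)
    (fun k z => exp_clippedLog_sub_logMGF_le k (hnonneg z))
    ((hgint.add (integrable_const 1)).const_mul 2)
    (integrable_klFun_two_mul_add_one hgint hnonneg ((integrable_klFun_rnDeriv_iff hac).2 hllr))
    ?_ fun k => lowerBoundAt_fiberTilted hκ hx (hF k) (abs_clippedLog_le g k) rfl
  filter_upwards [hmean] with z hz using tendsto_exp_clippedLog_sub_logMGF hg hnonneg hz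

end FiberLowerBound

section PairLDP

variable {X Y : Type*} [MeasurableSpace X] [MeasurableSpace Y] {κ : Kernel X Y} {ρ : Measure X}

/-- The rate function of the pair empirical measures: the relative entropy with respect to `ρ ⊗ₘ κ`,
restricted to the measures whose first marginal is the limit `ρ` of the initial positions. -/
def pairRate (ρ : Measure X) (κ : Kernel X Y) (q : ProbabilityMeasure (X × Y)) : ℝ≥0∞ :=
  if (q : Measure (X × Y)).fst = ρ then klDiv (q : Measure (X × Y)) (ρ ⊗ₘ κ) else ⊤

variable [MetricSpace X] [BorelSpace X] [MetricSpace Y] [BorelSpace Y] [IsMarkovKernel κ]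

theorem exists_lt_integral_sub_integral_logMGF [SecondCountableTopologyEither X Y]
    [IsFiniteMeasure ρ] {q : ProbabilityMeasure (X × Y)} {a : ℝ}
    (ha : (a : EReal) < pairRate ρ κ q) :
    ∃ F : BoundedContinuousFunction (X × Y) ℝ,
      a < ∫ z, F z ∂(q : Measure (X × Y)) - ∫ b, logMGF κ F b ∂ρ := by
  by_contra! hle
  have hnonneg : 0 ≤ a := by
    have hzero (b : X) : logMGF κ (0 : X × Y → ℝ) b = 0 := logMGF_comp_fst (fun _ => 0) b
    simpa only [hzero, BoundedContinuousFunction.coe_zero, Pi.zero_apply, integral_zero, sub_zero]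
      using hle 0
  rw [pairRate, if_pos (fst_eq_of_integral_sub_integral_logMGF_le hle)] at ha
  refine ha.not_ge ?_
  rw [← max_eq_left hnonneg, ← EReal.coe_ennreal_ofReal, EReal.coe_ennreal_le_coe_ennreal_iff]
  exact klDiv_compProd_le_of_integral_sub_integral_logMGF_le hle

theorem isLDP_empiricalLaw_fiberLaw [SecondCountableTopology X] [SecondCountableTopology Y]
    [Nonempty X] [Nonempty Y] [IsProbabilityMeasure ρ] (hκ : IsFeller κ)
    (hκtight : ∀ a, IsTightMeasureSet {κ a}) (hρκ : IsTightMeasureSet {ρ ⊗ₘ κ})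
    {x : (n : ℕ) → Fin n → X}
    (hx : TendstoNarrowly (fun n => averageMeasure fun i => Measure.dirac (x n i)) ρ) :
    IsLDP (fun n => empiricalLaw fun i => fiberLaw κ (x n i)) (pairRate ρ κ) := by
  refine (exponentiallyTight_empiricalLaw_fiberLaw hκ hκtight hρκ hx).isLDP
    ⟨⟨ρ ⊗ₘ κ, inferInstance⟩, ?_⟩ (fun q => ?_) fun q a ha => ?_
  · simp only [pairRate, ProbabilityMeasure.coe_mk, Measure.fst_compProd, if_true, klDiv_self,
      ne_eq, ENNReal.zero_ne_top, not_false_eq_true]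
  · rcases eq_or_ne (pairRate ρ κ q) ⊤ with htop | htop
    · intro U _
      simp only [htop, EReal.coe_ennreal_top, EReal.neg_top, bot_le]
    · obtain ⟨hfst, hkl⟩ := ite_ne_right_iff.1 htop
      rw [pairRate, if_pos hfst]
      exact lowerBoundAt_klDiv hκ hx hfst hkl
  · obtain ⟨F, hF⟩ := exists_lt_integral_sub_integral_logMGF ha
    exact exists_mem_nhds_expGrowthSup_le hκ hx hF

end PairLDP

section Marginals

theorem map_averageMeasure {Z W : Type*} [MeasurableSpace Z] [MeasurableSpace W] {f : Z → W}
    (hf : Measurable f) {n : ℕ} (m : Fin n → Measure Z) :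
    (averageMeasure m).map f = averageMeasure fun i => (m i).map f := by
  ext s hs
  simp only [averageMeasure_apply, Measure.map_apply hf hs]

theorem map_empiricalMeasure {Z W : Type*} [MeasurableSpace Z] [Nonempty Z] [MeasurableSpace W]
    [Nonempty W] {f : Z → W} (hf : Measurable f) {n : ℕ} (hn : n ≠ 0) (z : Fin n → Z) :
    (empiricalMeasure z).map hf.aemeasurable = empiricalMeasure (f ∘ z) := by
  refine Subtype.ext (?_ : (empiricalMeasure z : Measure Z).map f = empiricalMeasure (f ∘ z))
  simp only [coe_empiricalMeasure hn, map_averageMeasure hf, Measure.map_dirac' hf,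
    Function.comp_apply]

theorem measurable_probabilityMeasure_map {Z W : Type*} [MeasurableSpace Z] [MeasurableSpace W]
    {f : Z → W} (hf : Measurable f) :
    Measurable fun q : ProbabilityMeasure Z => q.map hf.aemeasurable :=
  ((Measure.measurable_map f hf).comp measurable_subtype_coe).subtype_mk

theorem map_empiricalLaw {Z W : Type*} [MeasurableSpace Z] [Nonempty Z] [MeasurableSpace W]
    [Nonempty W] {f : Z → W} (hf : Measurable f) {n : ℕ} (hn : n ≠ 0) (m : Fin n → Measure Z)
    [∀ i, IsProbabilityMeasure (m i)] :
    (empiricalLaw m).map (fun q => q.map hf.aemeasurable) =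
      empiricalLaw fun i => (m i).map f := by
  have : ∀ i, IsProbabilityMeasure ((m i).map f) := fun i =>
    Measure.isProbabilityMeasure_map hf.aemeasurable
  rw [empiricalLaw, empiricalLaw, ← Measure.pi_map_pi fun _ => hf.aemeasurable,
    Measure.map_map (measurable_probabilityMeasure_map hf) measurable_empiricalMeasure,
    Measure.map_map measurable_empiricalMeasure (by fun_prop)]
  exact congrArg (Measure.map · (Measure.pi m)) (funext fun z => map_empiricalMeasure hf hn z)

theorem map_snd_fiberLaw {X Y : Type*} [MeasurableSpace X] [MeasurableSpace Y] (κ : Kernel X Y)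
    (a : X) : (fiberLaw κ a).map Prod.snd = κ a := by
  rw [fiberLaw, Measure.map_map measurable_snd measurable_prodMk_left]
  exact Measure.map_id

variable {X Y : Type*} [MeasurableSpace X] [MeasurableSpace Y] {κ : Kernel X Y} [IsMarkovKernel κ]
  {ρ : Measure X} [IsProbabilityMeasure ρ]

theorem iInf_pairRate_eq (σ : ProbabilityMeasure Y) :
    ⨅ q ∈ (fun q : ProbabilityMeasure (X × Y) => q.map measurable_snd.aemeasurable) ⁻¹' {σ},
        pairRate ρ κ q =
      ⨅ q ∈ {q : Measure (X × Y) |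
        q.map Prod.fst = ρ ∧ q.map Prod.snd = (σ : Measure Y) ∧ IsProbabilityMeasure q},
        relEntNN q (ρ ⊗ₘ κ) := by
  refine le_antisymm (le_iInf₂ fun q hq => ?_) (le_iInf₂ fun q hq => ?_)
  · obtain ⟨hfst, hsnd, hprob⟩ := hq
    refine (iInf₂_le ⟨q, hprob⟩ (Subtype.ext hsnd : _ = σ)).trans_eq ?_
    rw [relEntNN_eq_klDiv]
    exact if_pos hfst
  · rw [pairRate]
    split_ifs with hfst
    · rw [← relEntNN_eq_klDiv]
      exact iInf₂_le (q : Measure (X × Y)) ⟨hfst, congrArg Subtype.val hq, inferInstance⟩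
    · exact le_top

variable [MetricSpace X] [SecondCountableTopology X] [BorelSpace X] [Nonempty X]
  [MetricSpace Y] [SecondCountableTopology Y] [BorelSpace Y] [Nonempty Y]

theorem isLDP_empiricalLaw_kernel (hκ : IsFeller κ)
    (hκtight : ∀ a, IsTightMeasureSet {κ a}) (hρκ : IsTightMeasureSet {ρ ⊗ₘ κ})
    {x : (n : ℕ) → Fin n → X}
    (hx : TendstoNarrowly (fun n => averageMeasure fun i => Measure.dirac (x n i)) ρ) :
    IsLDP (fun n => empiricalLaw fun i => κ (x n i)) fun σ =>
      ⨅ q ∈ (fun q : ProbabilityMeasure (X × Y) => q.map measurable_snd.aemeasurable) ⁻¹' {σ},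
        pairRate ρ κ q := by
  refine ((isLDP_empiricalLaw_fiberLaw hκ hκtight hρκ hx).map
    (ProbabilityMeasure.continuous_map continuous_snd)
    (measurable_probabilityMeasure_map measurable_snd)).congr ?_
  filter_upwards [eventually_ne_atTop 0] with n hn
  simp only [map_empiricalLaw measurable_snd hn, map_snd_fiberLaw]

end Marginals

section ContinuousFamilies

variable {X Y : Type*} [MeasurableSpace X] [MeasurableSpace Y]

theorem bind_map_prodMk (ρ : Measure X) [SFinite ρ] (κ : Kernel X Y) [IsSFiniteKernel κ] :
    (ρ.bind fun a => (κ a).map (Prod.mk a)) = ρ ⊗ₘ κ := by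
  rw [Measure.compProd_eq_comp_prod]
  congr 1
  ext1 a
  rw [Kernel.prod_apply, Kernel.id_apply, Measure.dirac_prod]

variable [TopologicalSpace X] [OpensMeasurableSpace X] [TopologicalSpace Y]
  [HasOuterApproxClosed Y] [BorelSpace Y]

theorem measurable_coe_of_continuous {ζ : X → ProbabilityMeasure Y} (hζ : Continuous ζ) :
    Measurable fun a => (ζ a : Measure Y) := by
  refine Measurable.measure_of_isPiSystem_of_isProbabilityMeasure
    (BorelSpace.measurable_eq.trans borel_eq_generateFrom_isClosed) isPiSystem_isClosed
    fun D hD => ?_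
  refine ENNReal.measurable_of_tendsto (f := fun k a => ∫⁻ b, hD.apprSeq k b ∂(ζ a : Measure Y))
    (fun k => ?_) (tendsto_pi_nhds.2 fun a => ?_)
  · exact ((ProbabilityMeasure.continuous_lintegral_boundedContinuousFunction _).comp
      hζ).measurable
  · exact HasOuterApproxClosed.tendsto_lintegral_apprSeq hD (ζ a : Measure Y)

/-- The Markov kernel given by a continuous family of probability measures. -/
def kernelOfContinuous (ζ : X → ProbabilityMeasure Y) (hζ : Continuous ζ) : Kernel X Y :=
  ⟨fun a => ζ a, measurable_coe_of_continuous hζ⟩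

instance isMarkovKernel_kernelOfContinuous (ζ : X → ProbabilityMeasure Y) (hζ : Continuous ζ) :
    IsMarkovKernel (kernelOfContinuous ζ hζ) :=
  ⟨fun a => (ζ a).2⟩

end ContinuousFamilies

section InnerRegularity

variable {X Y : Type*} [TopologicalSpace X] [T2Space X] [MeasurableSpace X] [OpensMeasurableSpace X]
  [TopologicalSpace Y] [T2Space Y] [MeasurableSpace Y] [OpensMeasurableSpace Y]

theorem isTightMeasureSet_singleton_of_forall_innerRegular
    (hX : ∀ μ : Measure X, IsProbabilityMeasure μ → μ.InnerRegular)
    (m : Measure X) [IsProbabilityMeasure m] : IsTightMeasureSet {m} :=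
  have := hX m inferInstance
  isTightMeasureSet_singleton_of_innerRegular

theorem isTightMeasureSet_singleton_prod_of_forall_innerRegular
    (hX : ∀ μ : Measure X, IsProbabilityMeasure μ → μ.InnerRegular)
    (hY : ∀ μ : Measure Y, IsProbabilityMeasure μ → μ.InnerRegular)
    (m : Measure (X × Y)) [IsProbabilityMeasure m] : IsTightMeasureSet {m} := by
  refine .prodMk ?_ ?_ <;> rw [image_singleton]
  · exact isTightMeasureSet_singleton_of_forall_innerRegular hX m.fst
  · exact isTightMeasureSet_singleton_of_forall_innerRegular hY m.snd

end InnerRegularity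

theorem stmt17_general {X Y : Type*} [MetricSpace X] [TopologicalSpace.SeparableSpace X]
    [MeasurableSpace X] [BorelSpace X] [MetricSpace Y] [TopologicalSpace.SeparableSpace Y]
    [MeasurableSpace Y] [BorelSpace Y] (ρ0 : ProbabilityMeasure X) (x : (n : ℕ) → Fin n → X)
    (hinit : ∀ f : BoundedContinuousFunction X ℝ,
      Tendsto (fun n : ℕ => ∫ a, f a ∂((n : ℝ≥0∞)⁻¹ • ∑ i : Fin n, Measure.dirac (x n i)))
        atTop (𝓝 (∫ a, f a ∂(ρ0 : Measure X))))
    (ζ : X → ProbabilityMeasure Y) (hζ : Continuous ζ)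
    (hζtight : ∀ a, IsTightMeasureSet {(ζ a : Measure Y)})
    (emp : (n : ℕ) → (Fin n → Y) → ProbabilityMeasure Y)
    (hemp : ∀ n : ℕ, 1 ≤ n → ∀ y : Fin n → Y,
      (emp n y : Measure Y) = (n : ℝ≥0∞)⁻¹ • ∑ i : Fin n, Measure.dirac (y i))
    (μ : ℕ → Measure (ProbabilityMeasure Y))
    (hμ : ∀ n : ℕ, μ n = (Measure.pi fun i : Fin n => (ζ (x n i) : Measure Y)).map (emp n))
    (p : Measure (X × Y))
    (hp : p = (ρ0 : Measure X).bind fun a => ((ζ a : Measure Y)).map (Prod.mk a))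
    (hptight : IsTightMeasureSet {p}) :
    IsLDP μ (fun ρ : ProbabilityMeasure Y =>
      ⨅ q ∈ {q : Measure (X × Y) |
          q.map Prod.fst = (ρ0 : Measure X) ∧ q.map Prod.snd = (ρ : Measure Y) ∧
          IsProbabilityMeasure q},
        relEntNN q p) := by
  have : Nonempty X := ρ0.nonempty
  have : Nonempty Y := (ζ (Classical.arbitrary X)).nonempty
  obtain rfl : p = (ρ0 : Measure X) ⊗ₘ kernelOfContinuous ζ hζ :=
    hp.trans (bind_map_prodMk (ρ0 : Measure X) (kernelOfContinuous ζ hζ))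
  simp only [← iInf_pairRate_eq]
  refine (isLDP_empiricalLaw_kernel (κ := kernelOfContinuous ζ hζ) hζ hζtight hptight
    hinit).congr ?_
  filter_upwards [eventually_ge_atTop 1] with n hn
  have hemp_eq : emp n = empiricalMeasure := funext fun y =>
    Subtype.ext ((hemp n hn y).trans (coe_empiricalMeasure (Nat.one_le_iff_ne_zero.1 hn) y).symm)
  rw [hμ, hemp_eq]
  rfl

/-- the (contracted) quenched large-deviation principle for the
empirical measures `L_n = n⁻¹ Σ δ_{Y_i}` of independent particles with
deterministic initial positions `x_i` and transition kernel `ζ`, with rate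
functional `J(ρ) = inf_{q ∈ Γ(ρ⁰,ρ)} H(q|p)`, where `p(dx dy) = ρ⁰(dx) ζ^x(dy)`. -/
theorem stmt17 (Ω : Type*) [MetricSpace Ω] [TopologicalSpace.SeparableSpace Ω]
    [MeasurableSpace Ω] [BorelSpace Ω]
    -- every Borel probability measure on Ω is Radon (inner regular):
    (hRadon : ∀ μ : Measure Ω, IsProbabilityMeasure μ → μ.InnerRegular)
    (ρ0 : ProbabilityMeasure Ω)
    (x : (n : ℕ) → Fin n → Ω)
    -- narrow convergence of the initial empirical measures to ρ⁰:
    (hinit : ∀ f : BoundedContinuousFunction Ω ℝ,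
      Tendsto (fun n : ℕ =>
          ∫ a, f a ∂((n : ℝ≥0∞)⁻¹ • ∑ i : Fin n, Measure.dirac (x n i)))
        atTop (𝓝 (∫ a, f a ∂(ρ0 : Measure Ω))))
    (ζ : Ω → ProbabilityMeasure Ω) (hζ : Continuous ζ)
    -- the empirical measure map of the final positions:
    (emp : (n : ℕ) → (Fin n → Ω) → ProbabilityMeasure Ω)
    (hemp : ∀ n : ℕ, 1 ≤ n → ∀ y : Fin n → Ω,
      (emp n y : Measure Ω) = (n : ℝ≥0∞)⁻¹ • ∑ i : Fin n, Measure.dirac (y i))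
    -- the law of L_n (the particles Y_i are independent with Y_i ~ ζ^{x_i}):
    (μ : ℕ → Measure (ProbabilityMeasure Ω))
    (hμ : ∀ n : ℕ, μ n =
      (Measure.pi fun i : Fin n => (ζ (x n i) : Measure Ω)).map (emp n))
    -- the reference measure p(dx dy) = ρ⁰(dx) ζ^x(dy):
    (p : Measure (Ω × Ω))
    (hp : p = (ρ0 : Measure Ω).bind fun a => ((ζ a : Measure Ω)).map (Prod.mk a)) :
    IsLDP μ (fun ρ : ProbabilityMeasure Ω =>
      ⨅ q ∈ {q : Measure (Ω × Ω) |
          q.map Prod.fst = (ρ0 : Measure Ω) ∧ q.map Prod.snd = (ρ : Measure Ω) ∧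
          IsProbabilityMeasure q},
        relEntNN q p) := by
  have : IsProbabilityMeasure p :=
    hp.trans (bind_map_prodMk _ (kernelOfContinuous ζ hζ)) ▸ inferInstance
  exact stmt17_general ρ0 x hinit ζ hζ
    (fun a => isTightMeasureSet_singleton_of_forall_innerRegular hRadon (ζ a)) emp hemp μ hμ p hp
    (isTightMeasureSet_singleton_prod_of_forall_innerRegular hRadon hRadon p)

end
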